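/- arXiv:2404.13763 — 3 statements merged into one kernel-verified Lean document; each statement's English description precedes it below -/
import Mathlib

section
/- For all integers b ≥ 2, the Kempner harmonic sum K(b,0) = I(b,0,0) satisfies, as b → ∞, K(b,0) = b·log b + ζ(2)/(2b) − ζ(3)/(3b²) − (2ζ(2) − ζ(4))/(4b³) − ((5/2)ζ(2) + ζ(5))/(5b⁴) + (5ζ(3) + ζ(6))/(6b⁵) + O(b⁻⁶). -/
open Filter Asymptotics

/-- The Irwin harmonic sum `I(b,d,k)`: sum of `1/m` over positive integers `m`
whose base-`b` digit list contains the digit `d` exactly `k` times. -/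
noncomputable def irwinSum (b d k : ℕ) : ℝ :=
  ∑' m : ℕ, if 0 < m ∧ (Nat.digits b m).count d = k then (1 : ℝ) / m else 0

/-- `ζ(s) = ∑_{n ≥ 1} n^{-s}` for an integer exponent. -/
noncomputable def zetaR (s : ℕ) : ℝ := ∑' n : ℕ, 1 / ((n : ℝ) + 1) ^ s


namespace KZ

noncomputable def s (b m : ℕ) : ℝ := if 0 < m ∧ (Nat.digits b m).count 0 = 0 then 1 else 0
noncomputable def t (b m : ℕ) : ℝ := if 0 < m ∧ ¬ (Nat.digits b m).count 0 = 0 then 1 else 0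

lemma hs_congr {f g : ℕ → ℝ} {a : ℝ} (h : ∀ m, f m = g m) : HasSum f a ↔ HasSum g a := by
  rw [funext h]

lemma s_nonneg (b m : ℕ) : 0 ≤ s b m := by unfold s; split_ifs <;> norm_num
lemma t_nonneg (b m : ℕ) : 0 ≤ t b m := by unfold t; split_ifs <;> norm_num
lemma s_le (b m : ℕ) : s b m ≤ 1 := by unfold s; split_ifs <;> norm_num
lemma t_le (b m : ℕ) : t b m ≤ 1 := by unfold t; split_ifs <;> norm_num
lemma s_zero (b : ℕ) : s b 0 = 0 := by simp [s]
lemma t_zero (b : ℕ) : t b 0 = 0 := by simp [t]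
lemma st (b m : ℕ) (hm : m ≠ 0) : s b m + t b m = 1 := by
  have : 0 < m := Nat.pos_of_ne_zero hm
  unfold s t
  by_cases h : (Nat.digits b m).count 0 = 0 <;> simp [h, this]

lemma dig0 (c m : ℕ) (hc : 1 ≤ c) (hm : m ≠ 0) :
    Nat.digits (c+1) ((c+1)*m) = 0 :: Nat.digits (c+1) m := by
  have := Nat.digits_add (c+1) (by omega) 0 m (by omega) (Or.inr hm)
  simpa using this

lemma dig1 (c m i : ℕ) (hc : 1 ≤ c) (hi : i < c) :
    Nat.digits (c+1) ((c+1)*m+(i+1)) = (i+1) :: Nat.digits (c+1) m := by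
  have := Nat.digits_add (c+1) (by omega) (i+1) m (by omega) (Or.inl (by omega))
  rw [add_comm ((c+1)*m)]; exact this

lemma s_mul (c m : ℕ) (hc : 1 ≤ c) : s (c+1) ((c+1)*m) = 0 := by
  rcases eq_or_ne m 0 with rfl | hm
  · simp [s]
  · unfold s; rw [dig0 c m hc hm]; simp

lemma t_mul (c m : ℕ) (hc : 1 ≤ c) (hm : m ≠ 0) : t (c+1) ((c+1)*m) = 1 := by
  unfold t; rw [dig0 c m hc hm]; simp; omega

lemma s_add (c m i : ℕ) (hc : 1 ≤ c) (hi : i < c) (hm : m ≠ 0) :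
    s (c+1) ((c+1)*m+(i+1)) = s (c+1) m := by
  unfold s; rw [dig1 c m i hc hi]
  have : 0 < m := Nat.pos_of_ne_zero hm
  simp [this]

lemma s_add0 (c i : ℕ) (hc : 1 ≤ c) (hi : i < c) : s (c+1) (i+1) = 1 := by
  have := dig1 c 0 i hc hi
  simp only [mul_zero, zero_add] at this
  unfold s; rw [this]; simp

lemma t_add (c m i : ℕ) (hc : 1 ≤ c) (hi : i < c) :
    t (c+1) ((c+1)*m+(i+1)) = t (c+1) m := by
  unfold t; rw [dig1 c m i hc hi]
  rcases Nat.eq_zero_or_pos m with rfl | hm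
  · simp
  · simp [hm]

lemma sum_split (b n : ℕ) (f : ℕ → ℝ) : ∑ i ∈ Finset.range (b*n), f i
    = ∑ i ∈ Finset.range n, ∑ a ∈ Finset.range b, f (b*i+a) := by
  induction n with
  | zero => simp
  | succ k ih => rw [Nat.mul_succ, Finset.sum_range_add, ih, Finset.sum_range_succ]

lemma hasSum_split (c : ℕ) (f : ℕ → ℝ) (S : ℝ) (hf : HasSum f S) :
    HasSum (fun m => ∑ i ∈ Finset.range c, f ((c+1)*m+(i+1)) + f ((c+1)*m)) S := by
  have h1 := (Equiv.hasSum_iff (Nat.divModEquiv (c+1)).symm).2 hf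
  have h2 := HasSum.prod_fiberwise h1 (fun m => hasSum_fintype _)
  convert h2 using 2 with m
  have := Finset.sum_range_succ' (fun i => f ((c+1)*m+i)) c
  simp only [add_zero] at this
  rw [← this, Finset.sum_range]
  refine Finset.sum_congr rfl fun i _ => ?_
  simp [Nat.divModEquiv, mul_comm]

lemma summ1 (c : ℕ) (hc : 1 ≤ c) : Summable (fun m : ℕ => s (c+1) m * (1/(m:ℝ))) := by
  set f : ℕ → ℝ := fun m : ℕ => s (c+1) m * (1/(m:ℝ)) with hf
  have f0 : ∀ m, 0 ≤ f m := fun m => mul_nonneg (s_nonneg _ _) (by positivity)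
  set P : ℕ → ℝ := fun n => ∑ i ∈ Finset.range n, f i with hP
  have hb : (0:ℝ) < (c:ℝ)+1 := by positivity
  set H : ℝ := ∑ a ∈ Finset.range (c+1), f a with hH
  have Pmono : ∀ n, P n ≤ P ((c+1)*n) := fun n =>
    Finset.sum_le_sum_of_subset_of_nonneg
      (Finset.range_subset_range.2 (Nat.le_mul_of_pos_left n (by omega))) (fun _ _ _ => f0 _)
  have key : ∀ m, ∑ a ∈ Finset.range (c+1), f ((c+1)*m+a) ≤
      (if m = 0 then H else 0) + (c/((c:ℝ)+1)) * f m := by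
    intro m
    rcases eq_or_ne m 0 with rfl | hm
    · simp [hH, hf, s_zero]
    · have hm' : (0:ℝ) < m := by exact_mod_cast Nat.pos_of_ne_zero hm
      rw [Finset.sum_range_succ']
      have e0 : f ((c+1)*m+0) = 0 := by simp [hf, s_mul c m hc]
      rw [e0]
      simp only [hm, if_false, add_zero, zero_add]
      calc ∑ i ∈ Finset.range c, f ((c+1)*m+(i+1))
          ≤ ∑ i ∈ Finset.range c, (1/((c:ℝ)+1)) * f m := by
            refine Finset.sum_le_sum fun i hi => ?_
            simp only [hf]
            rw [s_add c m i hc (Finset.mem_range.1 hi) hm]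
            have : (1:ℝ)/(((c+1)*m+(i+1) : ℕ):ℝ) ≤ 1/((c:ℝ)+1) * (1/m) := by
              rw [one_div_mul_one_div]
              apply one_div_le_one_div_of_le (by positivity)
              push_cast
              have : (0:ℝ) ≤ i := by positivity
              linarith
            calc _ ≤ s (c+1) m * (1/((c:ℝ)+1) * (1/m)) :=
                  mul_le_mul_of_nonneg_left this (s_nonneg _ _)
              _ = _ := by ring
        _ = _ := by simp; ring
  have H0 : 0 ≤ H := Finset.sum_nonneg fun _ _ => f0 _
  have bound : ∀ n, P ((c+1)*n) ≤ H + c/((c:ℝ)+1) * P n := by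
    intro n
    simp only [hP]
    rw [sum_split]
    refine (Finset.sum_le_sum fun m _ => key m).trans ?_
    rw [Finset.sum_add_distrib, ← Finset.mul_sum]
    gcongr
    rw [Finset.sum_ite_eq']
    split_ifs <;> linarith
  refine summable_of_sum_range_le (c := ((c:ℝ)+1)*H) f0 fun n => ?_
  have h1 := bound n
  have h2 := Pmono n
  change P n ≤ _
  have h3 : P n ≤ H + c/((c:ℝ)+1) * P n := h2.trans h1
  have h4 : (c/((c:ℝ)+1)) * ((c:ℝ)+1) = c := by field_simp
  have h5 := mul_le_mul_of_nonneg_right h3 hb.le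
  have h6 : (H + c/((c:ℝ)+1) * P n) * ((c:ℝ)+1) = H * ((c:ℝ)+1) + c * P n := by
    rw [add_mul, mul_right_comm, h4]
  rw [h6] at h5
  linarith

noncomputable def D (m : ℕ) : ℝ := Real.log ((m:ℝ)+1) - Real.log m

lemma D_eq (m : ℕ) (hm : m ≠ 0) : D m = Real.log (1 + 1/(m:ℝ)) := by
  have hm' : (0:ℝ) < m := by exact_mod_cast Nat.pos_of_ne_zero hm
  unfold D
  rw [← Real.log_div (by positivity) (by positivity)]
  congr 1; field_simp

lemma D_nonneg (m : ℕ) : 0 ≤ D m := by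
  rcases eq_or_ne m 0 with rfl | hm
  · simp [D]
  · rw [D_eq m hm]; apply Real.log_nonneg
    have : (0:ℝ) ≤ 1/m := by positivity
    linarith

lemma D_le (m : ℕ) : D m ≤ 1/(m:ℝ) := by
  rcases eq_or_ne m 0 with rfl | hm
  · simp [D]
  · rw [D_eq m hm]
    have : (0:ℝ) ≤ 1/m := by positivity
    have := Real.log_le_sub_one_of_pos (x := 1+1/(m:ℝ)) (by linarith)
    linarith

lemma hasSum_log (c : ℕ) (hc : 1 ≤ c) :
    HasSum (fun m : ℕ => s (c+1) m * D ((c+1)*m)) (Real.log ((c:ℝ)+1)) := by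
  have hs : Summable (fun m => s (c+1) m * D m) :=
    Summable.of_nonneg_of_le (fun m => mul_nonneg (s_nonneg _ _) (D_nonneg _))
      (fun m => mul_le_mul_of_nonneg_left (D_le m) (s_nonneg _ _)) (summ1 c hc)
  have h1 := hs.hasSum
  have h2 := hasSum_split c _ _ h1
  have h3 : HasSum (fun m : ℕ => if m = 0 then Real.log ((c:ℝ)+1) else 0)
      (Real.log ((c:ℝ)+1)) := hasSum_ite_eq 0 _
  have h4 := (h3.add h1).sub h2
  rw [add_sub_cancel_right] at h4
  refine (hs_congr fun m => ?_).mpr h4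
  · simp only [s_mul c m hc, zero_mul, add_zero]
    have tele : ∑ i ∈ Finset.range c, D ((c+1)*m+(i+1))
        = Real.log (((c:ℝ)+1)*(m+1)) - Real.log (((c:ℝ)+1)*m+1) := by
      have := Finset.sum_range_sub (fun i : ℕ => Real.log (((c:ℝ)+1)*m+i+1)) c
      simp only [Nat.cast_zero, add_zero] at this
      rw [show ((c:ℝ)+1)*(m+1) = ((c:ℝ)+1)*m+c+1 by ring, ← this]
      refine Finset.sum_congr rfl fun i _ => ?_
      unfold D; push_cast; congr 2 <;> ring
    rcases eq_or_ne m 0 with rfl | hm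
    · simp only [s_zero, zero_mul, if_true, add_zero]
      rw [Finset.sum_congr rfl (g := fun i => D ((c+1)*0+(i+1)))]
      · rw [tele]; simp
      · intro i hi
        have := s_add0 c i hc (Finset.mem_range.1 hi)
        simp only [mul_zero, zero_add, this, one_mul]
    · have hm' : (0:ℝ) < m := by exact_mod_cast Nat.pos_of_ne_zero hm
      have hb : (0:ℝ) < (c:ℝ)+1 := by positivity
      rw [Finset.sum_congr rfl (g := fun i => s (c+1) m * D ((c+1)*m+(i+1)))]
      · rw [← Finset.mul_sum, tele]
        simp only [hm, if_false, D]
        push_cast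
        rw [Real.log_mul hb.ne' hm'.ne', Real.log_mul hb.ne' (by positivity)]
        ring
      · intro i hi
        rw [s_add c m i hc (Finset.mem_range.1 hi) hm]

lemma zeta_hasSum (j : ℕ) (hj : 2 ≤ j) : HasSum (fun m : ℕ => 1/(m:ℝ)^j) (zetaR j) := by
  have h : Summable (fun m : ℕ => 1/(m:ℝ)^j) := Real.summable_one_div_nat_pow.2 (by omega)
  have h2 := h.tsum_eq_zero_add
  have : zetaR j = ∑' m : ℕ, 1/(m:ℝ)^j := by
    rw [h2]; unfold zetaR
    have : j ≠ 0 := by omega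
    simp [this]
  rw [this]; exact h.hasSum

lemma zeta_nonneg (j : ℕ) : 0 ≤ zetaR j := tsum_nonneg fun _ => by positivity

noncomputable def M (b j : ℕ) : ℝ := ∑' m : ℕ, s b m * (1/(m:ℝ)^j)
noncomputable def R (b j : ℕ) : ℝ := ∑' m : ℕ, t b m * (1/(m:ℝ)^j)

lemma M_hasSum (b j : ℕ) (hj : 2 ≤ j) : HasSum (fun m : ℕ => s b m * (1/(m:ℝ)^j)) (M b j) :=
  (Summable.of_nonneg_of_le (fun m => mul_nonneg (s_nonneg _ _) (by positivity))
    (fun m => mul_le_of_le_one_left (by positivity) (s_le _ _)) (zeta_hasSum j hj).summable).hasSum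

lemma R_hasSum (b j : ℕ) (hj : 2 ≤ j) : HasSum (fun m : ℕ => t b m * (1/(m:ℝ)^j)) (R b j) :=
  (Summable.of_nonneg_of_le (fun m => mul_nonneg (t_nonneg _ _) (by positivity))
    (fun m => mul_le_of_le_one_left (by positivity) (t_le _ _)) (zeta_hasSum j hj).summable).hasSum

lemma R_nonneg (b j : ℕ) : 0 ≤ R b j :=
  tsum_nonneg fun _ => mul_nonneg (t_nonneg _ _) (by positivity)

lemma MR (b j : ℕ) (hj : 2 ≤ j) : M b j = zetaR j - R b j := by
  have h := (M_hasSum b j hj).add (R_hasSum b j hj)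
  have : M b j + R b j = zetaR j := by
    refine h.unique ?_
    refine (hs_congr fun m => ?_).mp (zeta_hasSum j hj)
    symm
    rcases eq_or_ne m 0 with rfl | hm
    · have : j ≠ 0 := by omega
      simp [this]
    · rw [← add_mul, st b m hm, one_mul]
  linarith

/-- the tail sum of the recursion -/
lemma Q_hasSum (c j : ℕ) (hc : 1 ≤ c) (hj : 2 ≤ j) :
    HasSum (fun m : ℕ => t (c+1) m * ∑ i ∈ Finset.range c, 1/(((c:ℝ)+1)*m+(i+1))^j)
      (R (c+1) j - zetaR j / ((c:ℝ)+1)^j) := by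
  have h := hasSum_split c _ _ (R_hasSum (c+1) j hj)
  have h2 := (zeta_hasSum j hj).div_const (((c:ℝ)+1)^j)
  refine (hs_congr fun m => ?_).mpr (h.sub h2)
  have e : t (c+1) ((c+1)*m) * (1/(((c+1)*m : ℕ):ℝ)^j) = 1/(m:ℝ)^j/((c:ℝ)+1)^j := by
    rcases eq_or_ne m 0 with rfl | hm
    · have : j ≠ 0 := by omega
      simp [this]
    · rw [t_mul c m hc hm]; push_cast; rw [mul_pow, one_mul, div_div, mul_comm]
  rw [e, add_sub_cancel_right, Finset.mul_sum]
  refine Finset.sum_congr rfl fun i hi => ?_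
  rw [t_add c m i hc (Finset.mem_range.1 hi)]
  push_cast; rfl

lemma Q_nonneg (c j : ℕ) (hc : 1 ≤ c) (hj : 2 ≤ j) :
    0 ≤ R (c+1) j - zetaR j / ((c:ℝ)+1)^j :=
  (Q_hasSum c j hc hj).nonneg fun m => mul_nonneg (t_nonneg _ _)
    (Finset.sum_nonneg fun i _ => by positivity)

lemma Q_le (c j : ℕ) (hc : 1 ≤ c) (hj : 2 ≤ j) :
    R (c+1) j - zetaR j / ((c:ℝ)+1)^j ≤ c/((c:ℝ)+1)^j * R (c+1) j := by
  refine hasSum_le (fun m => ?_) (Q_hasSum c j hc hj) ((R_hasSum (c+1) j hj).mul_left _)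
  rcases eq_or_ne m 0 with rfl | hm
  · simp [t_zero]
  have hm' : (0:ℝ) < m := by exact_mod_cast Nat.pos_of_ne_zero hm
  have : ∑ i ∈ Finset.range c, 1/(((c:ℝ)+1)*m+(i+1))^j
      ≤ ∑ i ∈ Finset.range c, 1/(((c:ℝ)+1)*m)^j := by
    refine Finset.sum_le_sum fun i _ => ?_
    apply one_div_le_one_div_of_le (by positivity)
    gcongr
    have : (0:ℝ) ≤ i := by positivity
    linarith
  refine (mul_le_mul_of_nonneg_left this (t_nonneg _ _)).trans (le_of_eq ?_)
  simp [mul_pow]; ring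

lemma R_le (c j : ℕ) (hc : 1 ≤ c) (hj : 2 ≤ j) :
    R (c+1) j ≤ 2 * zetaR j / ((c:ℝ)+1)^j := by
  have h := Q_le c j hc hj
  have hc' : (1:ℝ) ≤ c := by exact_mod_cast hc
  have h2 : c/((c:ℝ)+1)^j ≤ 1/2 := by
    rw [div_le_iff₀ (by positivity)]
    have : ((c:ℝ)+1)^2 ≤ ((c:ℝ)+1)^j := pow_le_pow_right₀ (by linarith) hj
    nlinarith
  have h3 := mul_le_mul_of_nonneg_right h2 (R_nonneg (c+1) j)
  have e : 2 * zetaR j / ((c:ℝ)+1)^j = 2 * (zetaR j / ((c:ℝ)+1)^j) := by ring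
  linarith

lemma pt (x a : ℝ) (hx : 0 < x) (ha : 0 ≤ a) :
    |1/(x+a)^2 - 1/x^2 + 2*a/x^3| ≤ 3*a^2/x^4 := by
  have e : 1/(x+a)^2 - 1/x^2 + 2*a/x^3 = (3*x*a^2+2*a^3)/(x^3*(x+a)^2) := by
    field_simp; ring
  rw [e, abs_of_nonneg (by positivity), div_le_div_iff₀ (by positivity) (by positivity)]
  have : 3*a^2*(x^3*(x+a)^2) - (3*x*a^2+2*a^3)*x^4 = a^3*x^3*(4*x+3*a) := by ring
  have h2 : 0 ≤ a^3*x^3*(4*x+3*a) := by positivity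
  linarith

lemma sum_id (c : ℕ) : ∑ i ∈ Finset.range c, 2*((i:ℝ)+1) = c*(c+1) := by
  induction c with
  | zero => simp
  | succ k ih => rw [Finset.sum_range_succ, ih]; push_cast; ring

lemma Q2 (c : ℕ) (hc : 1 ≤ c) :
    |(R (c+1) 2 - zetaR 2 / ((c:ℝ)+1)^2) - c/((c:ℝ)+1)^2 * R (c+1) 2
      + c/((c:ℝ)+1)^2 * R (c+1) 3| ≤ 3/((c:ℝ)+1) * R (c+1) 4 := by
  have h := ((Q_hasSum c 2 hc le_rfl).sub ((R_hasSum (c+1) 2 le_rfl).mul_left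
    (c/((c:ℝ)+1)^2))).add ((R_hasSum (c+1) 3 (by norm_num)).mul_left (c/((c:ℝ)+1)^2))
  have h4 := (R_hasSum (c+1) 4 (by norm_num)).mul_left (3/((c:ℝ)+1))
  have key : ∀ m : ℕ, |t (c+1) m * ∑ i ∈ Finset.range c, 1/(((c:ℝ)+1)*m+(i+1))^2
      - c/((c:ℝ)+1)^2 * (t (c+1) m * (1/(m:ℝ)^2)) + c/((c:ℝ)+1)^2 * (t (c+1) m * (1/(m:ℝ)^3))|
      ≤ 3/((c:ℝ)+1) * (t (c+1) m * (1/(m:ℝ)^4)) := by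
    intro m
    rcases eq_or_ne m 0 with rfl | hm
    · simp [t_zero]
    have hm' : (0:ℝ) < m := by exact_mod_cast Nat.pos_of_ne_zero hm
    have hb : (0:ℝ) < (c:ℝ)+1 := by positivity
    set x := ((c:ℝ)+1)*m with hx
    have hx0 : 0 < x := by positivity
    have e : t (c+1) m * ∑ i ∈ Finset.range c, 1/(x+(i+1))^2
      - c/((c:ℝ)+1)^2 * (t (c+1) m * (1/(m:ℝ)^2)) + c/((c:ℝ)+1)^2 * (t (c+1) m * (1/(m:ℝ)^3))
      = t (c+1) m * ∑ i ∈ Finset.range c,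
        (1/(x+((i:ℝ)+1))^2 - 1/x^2 + 2*((i:ℝ)+1)/x^3) := by
      rw [Finset.sum_add_distrib, Finset.sum_sub_distrib,
        ← Finset.sum_div _ (fun i : ℕ => 2*((i:ℝ)+1)), sum_id]
      simp only [Finset.sum_const, Finset.card_range, nsmul_eq_mul]
      have e1 : (c:ℝ) * (1/x^2) = c/((c:ℝ)+1)^2 * (1/(m:ℝ)^2) := by rw [hx]; field_simp
      have e2 : (c:ℝ)*(c+1)/x^3 = c/((c:ℝ)+1)^2 * (1/(m:ℝ)^3) := by rw [hx]; field_simp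
      rw [e1, e2]; ring
    rw [e, abs_mul, abs_of_nonneg (t_nonneg _ _)]
    have : |∑ i ∈ Finset.range c, (1/(x+((i:ℝ)+1))^2 - 1/x^2 + 2*((i:ℝ)+1)/x^3)|
        ≤ 3/((c:ℝ)+1) * (1/(m:ℝ)^4) := by
      refine (Finset.abs_sum_le_sum_abs _ _).trans ?_
      calc _ ≤ ∑ i ∈ Finset.range c, 3*((c:ℝ)+1)^2/x^4 := by
            refine Finset.sum_le_sum fun i hi => (pt x _ hx0 (by positivity)).trans ?_
            have : (i:ℝ) ≤ c := by exact_mod_cast (Finset.mem_range.1 hi).le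
            gcongr
        _ = c * (3*((c:ℝ)+1)^2/x^4) := by simp
        _ ≤ (c+1) * (3*((c:ℝ)+1)^2/x^4) := by gcongr; linarith
        _ = _ := by rw [hx]; field_simp
    calc _ ≤ t (c+1) m * (3/((c:ℝ)+1) * (1/(m:ℝ)^4)) :=
          mul_le_mul_of_nonneg_left this (t_nonneg _ _)
      _ = _ := by ring
  rw [abs_le]
  constructor
  · exact hasSum_le (fun m => (abs_le.1 (key m)).1) h4.neg h
  · exact hasSum_le (fun m => (abs_le.1 (key m)).2) h h4

lemma logpt (x : ℝ) (h0 : 0 ≤ x) (h1 : x ≤ 1/2) :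
    |Real.log (1+x) - (x - x^2/2 + x^3/3 - x^4/4 + x^5/5 - x^6/6)| ≤ 2*x^7 := by
  have h := Real.abs_log_sub_add_sum_range_le (x := -x) (by rw [abs_neg, abs_of_nonneg h0]; linarith) 6
  simp only [Finset.sum_range_succ, Finset.sum_range_zero, abs_neg, abs_of_nonneg h0] at h
  have h2 : x^(6+1)/(1-x) ≤ 2*x^7 := by
    rw [div_le_iff₀ (by linarith)]
    have : 0 ≤ x^7 := by positivity
    norm_num
    nlinarith
  refine le_trans (le_of_eq ?_) (h.trans h2)
  congr 1
  push_cast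
  rw [sub_neg_eq_add]
  ring

lemma irwin_hasSum (c : ℕ) (hc : 1 ≤ c) :
    HasSum (fun m : ℕ => s (c+1) m * (1/(m:ℝ))) (irwinSum (c+1) 0 0) := by
  have : irwinSum (c+1) 0 0 = ∑' m : ℕ, s (c+1) m * (1/(m:ℝ)) := by
    unfold irwinSum s
    congr 1; ext m; split_ifs <;> simp
  rw [this]; exact (summ1 c hc).hasSum

lemma stepA (c : ℕ) (hc : 1 ≤ c) (e : ℝ) (he : e = 1/((c:ℝ)+1)) :
    |Real.log ((c:ℝ)+1) - (e * irwinSum (c+1) 0 0 - e^2/2 * M (c+1) 2 + e^3/3 * M (c+1) 3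
      - e^4/4 * M (c+1) 4 + e^5/5 * M (c+1) 5 - e^6/6 * M (c+1) 6)| ≤ 2*e^7 * zetaR 2 := by
  have hb : (0:ℝ) < (c:ℝ)+1 := by positivity
  have hc' : (1:ℝ) ≤ c := by exact_mod_cast hc
  have he0 : 0 < e := by rw [he]; positivity
  have he1 : e ≤ 1/2 := by rw [he]; apply one_div_le_one_div_of_le <;> linarith
  have h := (hasSum_log c hc).sub (((((((irwin_hasSum c hc).mul_left e).sub
    ((M_hasSum (c+1) 2 (by norm_num)).mul_left (e^2/2))).add
    ((M_hasSum (c+1) 3 (by norm_num)).mul_left (e^3/3))).sub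
    ((M_hasSum (c+1) 4 (by norm_num)).mul_left (e^4/4))).add
    ((M_hasSum (c+1) 5 (by norm_num)).mul_left (e^5/5))).sub
    ((M_hasSum (c+1) 6 (by norm_num)).mul_left (e^6/6)))
  have h2 := (zeta_hasSum 2 le_rfl).mul_left (2*e^7)
  have key : ∀ m : ℕ, |s (c+1) m * D ((c+1)*m) - (e * (s (c+1) m * (1/(m:ℝ)))
      - e^2/2 * (s (c+1) m * (1/(m:ℝ)^2)) + e^3/3 * (s (c+1) m * (1/(m:ℝ)^3))
      - e^4/4 * (s (c+1) m * (1/(m:ℝ)^4)) + e^5/5 * (s (c+1) m * (1/(m:ℝ)^5))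
      - e^6/6 * (s (c+1) m * (1/(m:ℝ)^6)))| ≤ 2*e^7 * (1/(m:ℝ)^2) := by
    intro m
    rcases eq_or_ne m 0 with rfl | hm
    · simp [s_zero]
    have hm' : (1:ℝ) ≤ m := by exact_mod_cast Nat.one_le_iff_ne_zero.2 hm
    set y : ℝ := 1/(m:ℝ) with hy
    have hy0 : 0 < y := by positivity
    have hy1 : y ≤ 1 := by rw [hy, div_le_one (by linarith)]; exact hm'
    have hp : ∀ k : ℕ, 1/(m:ℝ)^k = y^k := fun k => by rw [hy, one_div_pow]
    have hD : D ((c+1)*m) = Real.log (1 + e*y) := by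
      rw [D_eq _ (by positivity), he, hy]
      congr 2; push_cast; rw [one_div_mul_one_div]
    simp only [hp, hD]
    have l := logpt (e*y) (by positivity) (by nlinarith)
    rw [show s (c+1) m * Real.log (1 + e*y) - (e * (s (c+1) m * y)
      - e^2/2 * (s (c+1) m * y^2) + e^3/3 * (s (c+1) m * y^3)
      - e^4/4 * (s (c+1) m * y^4) + e^5/5 * (s (c+1) m * y^5)
      - e^6/6 * (s (c+1) m * y^6)) = s (c+1) m * (Real.log (1+e*y) -
      (e*y - (e*y)^2/2 + (e*y)^3/3 - (e*y)^4/4 + (e*y)^5/5 - (e*y)^6/6)) by ring,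
      abs_mul, abs_of_nonneg (s_nonneg _ _)]
    refine (mul_le_of_le_one_left (abs_nonneg _) (s_le _ _)).trans (l.trans ?_)
    rw [mul_pow, ← mul_assoc]
    exact mul_le_mul_of_nonneg_left (pow_le_pow_of_le_one hy0.le hy1 (by norm_num)) (by positivity)
  rw [abs_le]
  constructor
  · exact hasSum_le (fun m => (abs_le.1 (key m)).1) h2.neg h
  · exact hasSum_le (fun m => (abs_le.1 (key m)).2) h h2

lemma alg (e A z2 z3 z4 z5 z6 R2 R3 R4 R5 R6 : ℝ) (e0 : 0 < e) (e1 : e ≤ 1/2)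
    (p2 : 0 ≤ z2) (p3 : 0 ≤ z3) (p4 : 0 ≤ z4) (p5 : 0 ≤ z5) (p6 : 0 ≤ z6)
    (hA : |A| ≤ 2*z2*e^6)
    (hq : |R2 - z2*e^2 - (e-e^2)*R2 + (e-e^2)*R3| ≤ 6*z4*e^5)
    (h3 : |R3 - z3*e^3| ≤ 2*z3*e^5)
    (h4 : |R4| ≤ 2*z4*e^4) (h5 : |R5| ≤ 2*z5*e^5) (h6 : |R6| ≤ 2*z6*e^6) :
    |A - e/2*(R2 - z2*e^2 - z2*e^3 + z3*e^4) + e^2/3*(R3-z3*e^3) - e^3/4*R4 + e^4/5*R5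
      - e^5/6*R6| ≤ (2*z2 + (6*z4+3*z3+z2) + z3 + z4 + z5 + z6)*e^6 := by
  have pw : ∀ k : ℕ, 6 ≤ k → e^k ≤ e^6 := fun k hk =>
    pow_le_pow_of_le_one e0.le (by linarith) hk
  have pw5 : e^6 ≤ e^5 := pow_le_pow_of_le_one e0.le (by linarith) (by norm_num)
  have ee : 0 ≤ e - e^2 := by nlinarith
  have ee1 : e - e^2 ≤ 1/2 := by nlinarith
  set X := R2 - z2*e^2 - z2*e^3 + z3*e^4 with hX
  set q := R2 - z2*e^2 - (e-e^2)*R2 + (e-e^2)*R3 with hq'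
  set U := R3 - z3*e^3 with hU
  have id1 : (1-e+e^2)*X = q - (e-e^2)*U + z3*e^6 - z2*e^5 := by
    rw [hX, hq', hU]; ring
  have b1 : |(e-e^2)*U| ≤ 2*z3*e^5 := by
    rw [abs_mul, abs_of_nonneg ee]
    exact (mul_le_of_le_one_left (abs_nonneg _) (by linarith)).trans h3
  have b2 : |(1-e+e^2)*X| ≤ (6*z4+3*z3+z2)*e^5 := by
    rw [id1]
    have c1 : 0 ≤ z3*e^6 := by positivity
    have c2 : 0 ≤ z2*e^5 := by positivity
    have c3 : z3*e^6 ≤ z3*e^5 := mul_le_mul_of_nonneg_left pw5 p3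
    have c4 : 0 ≤ z3*e^5 := by positivity
    rw [abs_le] at hq b1 ⊢
    constructor <;> linarith [hq.1, hq.2, b1.1, b1.2]
  have b3 : |X| ≤ 2*((6*z4+3*z3+z2)*e^5) := by
    rw [abs_mul, abs_of_nonneg (by nlinarith)] at b2
    have : (1/2)*|X| ≤ (1-e+e^2)*|X| := mul_le_mul_of_nonneg_right (by linarith) (abs_nonneg _)
    linarith
  have t2 : |e/2*X| ≤ (6*z4+3*z3+z2)*e^6 := by
    rw [abs_mul, abs_of_pos (by positivity)]
    calc e/2*|X| ≤ e/2*(2*((6*z4+3*z3+z2)*e^5)) := by gcongr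
      _ = _ := by ring
  have t3 : |e^2/3*U| ≤ z3*e^6 := by
    rw [abs_mul, abs_of_pos (by positivity)]
    calc e^2/3*|U| ≤ e^2/3*(2*z3*e^5) := by gcongr
      _ = 2/3*(z3*e^7) := by ring
      _ ≤ 1*(z3*e^6) := by
        exact mul_le_mul (by norm_num) (mul_le_mul_of_nonneg_left (pw 7 (by norm_num)) (by assumption))
          (by positivity) (by norm_num)
      _ = _ := by ring
  have t4 : |e^3/4*R4| ≤ z4*e^6 := by
    rw [abs_mul, abs_of_pos (by positivity)]
    calc e^3/4*|R4| ≤ e^3/4*(2*z4*e^4) := by gcongr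
      _ = 1/2*(z4*e^7) := by ring
      _ ≤ 1*(z4*e^6) := by
        exact mul_le_mul (by norm_num) (mul_le_mul_of_nonneg_left (pw 7 (by norm_num)) (by assumption))
          (by positivity) (by norm_num)
      _ = _ := by ring
  have t5 : |e^4/5*R5| ≤ z5*e^6 := by
    rw [abs_mul, abs_of_pos (by positivity)]
    calc e^4/5*|R5| ≤ e^4/5*(2*z5*e^5) := by gcongr
      _ = 2/5*(z5*e^9) := by ring
      _ ≤ 1*(z5*e^6) := by
        exact mul_le_mul (by norm_num) (mul_le_mul_of_nonneg_left (pw 9 (by norm_num)) (by assumption))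
          (by positivity) (by norm_num)
      _ = _ := by ring
  have t6 : |e^5/6*R6| ≤ z6*e^6 := by
    rw [abs_mul, abs_of_pos (by positivity)]
    calc e^5/6*|R6| ≤ e^5/6*(2*z6*e^6) := by gcongr
      _ = 1/3*(z6*e^11) := by ring
      _ ≤ 1*(z6*e^6) := by
        exact mul_le_mul (by norm_num) (mul_le_mul_of_nonneg_left (pw 11 (by norm_num)) (by assumption))
          (by positivity) (by norm_num)
      _ = _ := by ring
  rw [abs_le] at hA t2 t3 t4 t5 t6 ⊢
  constructor <;> linarith [hA.1, hA.2, t2.1, t2.2, t3.1, t3.2, t4.1, t4.2, t5.1, t5.2, t6.1, t6.2]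

lemma main (c : ℕ) (hc : 1 ≤ c) :
    |irwinSum (c+1) 0 0 -
      (((c:ℝ)+1) * Real.log ((c:ℝ)+1) + zetaR 2 / (2 * ((c:ℝ)+1)) - zetaR 3 / (3 * ((c:ℝ)+1) ^ 2)
        - (2 * zetaR 2 - zetaR 4) / (4 * ((c:ℝ)+1) ^ 3)
        - (5 / 2 * zetaR 2 + zetaR 5) / (5 * ((c:ℝ)+1) ^ 4)
        + (5 * zetaR 3 + zetaR 6) / (6 * ((c:ℝ)+1) ^ 5))| ≤
    (2*zetaR 2 + (6*zetaR 4+3*zetaR 3+zetaR 2) + zetaR 3 + zetaR 4 + zetaR 5 + zetaR 6) *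
      (((c:ℝ)+1)^6)⁻¹ := by
  have hc' : (1:ℝ) ≤ c := by exact_mod_cast hc
  have hb : (0:ℝ) < (c:ℝ)+1 := by positivity
  obtain ⟨e, he⟩ : ∃ e, e = 1/((c:ℝ)+1) := ⟨_, rfl⟩
  have he0 : 0 < e := by rw [he]; positivity
  have he1 : e ≤ 1/2 := by rw [he]; apply one_div_le_one_div_of_le <;> linarith
  have hbe : (c:ℝ)+1 = 1/e := by rw [he]; simp
  have hce : (c:ℝ) = 1/e - 1 := by linarith
  have hA := stepA c hc e he
  have hq := Q2 c hc
  have h3 := Q_le c 3 hc (by norm_num)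
  have h3' := Q_nonneg c 3 hc (by norm_num)
  have r3 := R_le c 3 hc (by norm_num)
  have r4 := R_le c 4 hc (by norm_num)
  have r5 := R_le c 5 hc (by norm_num)
  have r6 := R_le c 6 hc (by norm_num)
  have n3 := R_nonneg (c+1) 3
  have n4 := R_nonneg (c+1) 4
  rw [MR (c+1) 2 (by norm_num), MR (c+1) 3 (by norm_num), MR (c+1) 4 (by norm_num),
    MR (c+1) 5 (by norm_num), MR (c+1) 6 (by norm_num)] at hA
  have dv : ∀ (x : ℝ) (k : ℕ), x/((c:ℝ)+1)^k = x*e^k := fun x k => by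
    rw [he, one_div_pow]; ring
  have dv2 : (c:ℝ)/((c:ℝ)+1)^2 = e - e^2 := by
    rw [he]; field_simp; ring
  have dv3 : (c:ℝ)*e^3 ≤ e^2 := by
    have : (c:ℝ)*e^3 = e^2 - e^3 := by rw [hce]; field_simp
    have : 0 < e^3 := by positivity
    linarith
  rw [dv2, dv] at hq
  simp only [dv] at h3 h3' r3 r4 r5 r6
  set K := irwinSum (c+1) 0 0 with hK
  set L := Real.log ((c:ℝ)+1) with hL
  have hfin := alg e (K - L/e - e/2*(zetaR 2 - R (c+1) 2) + e^2/3*(zetaR 3 - R (c+1) 3)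
      - e^3/4*(zetaR 4 - R (c+1) 4) + e^4/5*(zetaR 5 - R (c+1) 5) - e^5/6*(zetaR 6 - R (c+1) 6))
    (zetaR 2) (zetaR 3) (zetaR 4) (zetaR 5) (zetaR 6) (R (c+1) 2) (R (c+1) 3) (R (c+1) 4)
    (R (c+1) 5) (R (c+1) 6) he0 he1 (zeta_nonneg _) (zeta_nonneg _) (zeta_nonneg _)
    (zeta_nonneg _) (zeta_nonneg _) ?_ ?_ ?_ ?_ ?_ ?_
  · have e6 : (((c:ℝ)+1)^6)⁻¹ = e^6 := by rw [he, one_div_pow, one_div]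
    rw [e6]
    refine le_trans (le_of_eq ?_) hfin
    congr 1
    rw [hbe]
    field_simp
    ring
  · have : (K - L/e - e/2*(zetaR 2 - R (c+1) 2) + e^2/3*(zetaR 3 - R (c+1) 3)
      - e^3/4*(zetaR 4 - R (c+1) 4) + e^4/5*(zetaR 5 - R (c+1) 5) - e^5/6*(zetaR 6 - R (c+1) 6))
      = -(1/e) * (L - (e * K - e^2/2 * (zetaR 2 - R (c+1) 2) + e^3/3 * (zetaR 3 - R (c+1) 3)
      - e^4/4 * (zetaR 4 - R (c+1) 4) + e^5/5 * (zetaR 5 - R (c+1) 5)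
      - e^6/6 * (zetaR 6 - R (c+1) 6))) := by
      field_simp; ring
    rw [this, abs_mul, abs_neg, abs_of_pos (show 0 < 1/e by positivity)]
    calc _ ≤ 1/e*(2*e^7*zetaR 2) := by gcongr
      _ = _ := by field_simp
  · refine hq.trans ?_
    rw [show 3/((c:ℝ)+1) = 3*e by rw [he]; ring]
    calc 3*e*R (c+1) 4 ≤ 3*e*(2*zetaR 4*e^4) := by gcongr
      _ = _ := by ring
  · rw [abs_of_nonneg h3']
    calc _ ≤ _ := h3
      _ ≤ e^2*(2*zetaR 3*e^3) := by gcongr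
      _ = _ := by ring
  · rw [abs_of_nonneg n4]; exact r4
  · rw [abs_of_nonneg (R_nonneg _ _)]; exact r5
  · rw [abs_of_nonneg (R_nonneg _ _)]; exact r6

end KZ

theorem kempner_zero_asymptotic :
    (fun b : ℕ => irwinSum b 0 0 -
      ((b : ℝ) * Real.log b + zetaR 2 / (2 * b) - zetaR 3 / (3 * (b : ℝ) ^ 2)
        - (2 * zetaR 2 - zetaR 4) / (4 * (b : ℝ) ^ 3)
        - (5 / 2 * zetaR 2 + zetaR 5) / (5 * (b : ℝ) ^ 4)
        + (5 * zetaR 3 + zetaR 6) / (6 * (b : ℝ) ^ 5)))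
      =O[atTop] fun b : ℕ => ((b : ℝ) ^ 6)⁻¹ := by
  refine IsBigO.of_bound (2*zetaR 2 + (6*zetaR 4+3*zetaR 3+zetaR 2) + zetaR 3 + zetaR 4
    + zetaR 5 + zetaR 6) ?_
  filter_upwards [eventually_ge_atTop 2] with b hb
  obtain ⟨c, rfl⟩ : ∃ c, b = c + 1 := ⟨b - 1, by omega⟩
  have h := KZ.main c (by omega)
  rw [Real.norm_eq_abs, Real.norm_eq_abs, abs_of_nonneg (a := (((c+1:ℕ):ℝ)^6)⁻¹) (by positivity)]
  push_cast
  exact h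
end

section
/- For all integers b ≥ 2, as b → ∞, K(b,0) = b·log b + b·log Γ(1 + 1/b) + γ − ζ(2)/(2b(b² − b + 1)) + 5ζ(3)/(6b⁵) + O(b⁻⁶), where Γ is the real Gamma function and γ is the Euler–Mascheroni constant. -/
open Filter Asymptotics

namespace Kempner

/-- The transfer operator: `S h (x) = (1/b) ∑_{a=1}^{b-1} h((a+x)/b)`. -/
noncomputable def S (b : ℕ) : (ℝ → ℝ) →ₗ[ℝ] (ℝ → ℝ) where
  toFun h := fun x => (∑ a ∈ Finset.Ico 1 b, h (((a : ℝ) + x) / b)) / b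
  map_add' h k := by
    funext x
    simp only [Pi.add_apply, Finset.sum_add_distrib, add_div]
  map_smul' c h := by
    funext x
    simp only [Pi.smul_apply, smul_eq_mul, RingHom.id_apply, ← Finset.mul_sum, mul_div_assoc]

lemma S_apply (b : ℕ) (h : ℝ → ℝ) (x : ℝ) :
    S b h x = (∑ a ∈ Finset.Ico 1 b, h (((a : ℝ) + x) / b)) / b := rfl

/-- Functional `M h = ∑_l (S^l h)(0)`. -/
noncomputable def M (b : ℕ) (h : ℝ → ℝ) : ℝ := ∑' l : ℕ, ((S b) ^ l) h 0

lemma mem_unit {b : ℕ} {a : ℕ} (ha : a < b) {x : ℝ} (hx : x ∈ Set.Icc (0 : ℝ) 1) :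
    ((a : ℝ) + x) / b ∈ Set.Icc (0 : ℝ) 1 := by
  have hb : (0 : ℝ) < b := by exact_mod_cast (by omega : 0 < b)
  have h1 : (a : ℝ) + 1 ≤ b := by exact_mod_cast ha
  constructor
  · have := hx.1
    positivity
  · rw [div_le_one hb]; linarith [hx.2]

lemma S_bound {b : ℕ} (hb : 2 ≤ b) {h : ℝ → ℝ} {C : ℝ}
    (hC : ∀ x ∈ Set.Icc (0 : ℝ) 1, |h x| ≤ C) :
    ∀ x ∈ Set.Icc (0 : ℝ) 1, |S b h x| ≤ C * (1 - 1 / b) := by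
  intro x hx
  have hb0 : (0 : ℝ) < b := by exact_mod_cast (by omega : 0 < b)
  rw [S_apply, abs_div, abs_of_pos hb0, div_le_iff₀ hb0]
  calc |∑ a ∈ Finset.Ico 1 b, h (((a : ℝ) + x) / b)|
      ≤ ∑ a ∈ Finset.Ico 1 b, |h (((a : ℝ) + x) / b)| := Finset.abs_sum_le_sum_abs _ _
    _ ≤ ∑ a ∈ Finset.Ico 1 b, C := by
        apply Finset.sum_le_sum
        intro a ha
        exact hC _ (mem_unit (Finset.mem_Ico.1 ha).2 hx)
    _ = C * (1 - 1 / b) * b := by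
        rw [Finset.sum_const, Nat.card_Ico, nsmul_eq_mul, Nat.cast_sub (by omega)]
        push_cast
        field_simp

lemma Spow_bound {b : ℕ} (hb : 2 ≤ b) {h : ℝ → ℝ} {C : ℝ}
    (hC : ∀ x ∈ Set.Icc (0 : ℝ) 1, |h x| ≤ C) (l : ℕ) :
    ∀ x ∈ Set.Icc (0 : ℝ) 1, |((S b) ^ l) h x| ≤ C * (1 - 1 / b) ^ l := by
  induction l with
  | zero => simpa using hC
  | succ l ih =>
    intro x hx
    have := S_bound hb ih x hx
    rw [pow_succ', Module.End.mul_apply, pow_succ, ← mul_assoc]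
    exact this

lemma hasSum_geo {b : ℕ} (hb : 2 ≤ b) : HasSum (fun l : ℕ => (1 - 1 / (b : ℝ)) ^ l) b := by
  have hb0 : (2 : ℝ) ≤ b := by exact_mod_cast hb
  have h1 : (1 : ℝ) / b ≤ 1 / 2 := by
    apply one_div_le_one_div_of_le <;> linarith
  have h2 : (0 : ℝ) < 1 / b := by positivity
  have := hasSum_geometric_of_lt_one (r := 1 - 1 / (b : ℝ)) (by linarith) (by linarith)
  simpa using this

/-- boundedness on the unit interval -/
def Bdd (h : ℝ → ℝ) : Prop := ∃ C, ∀ x ∈ Set.Icc (0 : ℝ) 1, |h x| ≤ C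

lemma zero_mem_unit : (0 : ℝ) ∈ Set.Icc (0 : ℝ) 1 := by simp

lemma M_summable {b : ℕ} (hb : 2 ≤ b) {h : ℝ → ℝ} (hh : Bdd h) :
    Summable fun l : ℕ => ((S b) ^ l) h 0 := by
  obtain ⟨C, hC⟩ := hh
  refine Summable.of_norm_bounded ((hasSum_geo hb).summable.mul_left C) ?_
  intro l
  exact Spow_bound hb hC l 0 zero_mem_unit

lemma M_bound {b : ℕ} (hb : 2 ≤ b) {h : ℝ → ℝ} {C : ℝ}
    (hC : ∀ x ∈ Set.Icc (0 : ℝ) 1, |h x| ≤ C) : |M b h| ≤ C * b := by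
  have := tsum_of_norm_bounded (f := fun l : ℕ => ((S b) ^ l) h 0) ((hasSum_geo hb).mul_left C)
    (fun l => Spow_bound hb hC l 0 zero_mem_unit)
  exact this

lemma Bdd.add {h k : ℝ → ℝ} (hh : Bdd h) (hk : Bdd k) : Bdd (h + k) := by
  obtain ⟨C, hC⟩ := hh
  obtain ⟨D, hD⟩ := hk
  exact ⟨C + D, fun x hx => (abs_add_le _ _).trans (add_le_add (hC x hx) (hD x hx))⟩

lemma Bdd.smul {h : ℝ → ℝ} (hh : Bdd h) (c : ℝ) : Bdd (c • h) := by
  obtain ⟨C, hC⟩ := hh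
  refine ⟨|c| * C, fun x hx => ?_⟩
  rw [Pi.smul_apply, smul_eq_mul, abs_mul]
  exact mul_le_mul_of_nonneg_left (hC x hx) (abs_nonneg _)

lemma Bdd.sub {h k : ℝ → ℝ} (hh : Bdd h) (hk : Bdd k) : Bdd (h - k) := by
  have : h - k = h + (-1 : ℝ) • k := by funext x; simp [sub_eq_add_neg]
  rw [this]; exact hh.add (hk.smul _)

lemma Bdd.S {b : ℕ} (hb : 2 ≤ b) {h : ℝ → ℝ} (hh : Bdd h) : Bdd (S b h) := by
  obtain ⟨C, hC⟩ := hh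
  exact ⟨_, S_bound hb hC⟩

lemma Bdd.of_cont {h : ℝ → ℝ} (hh : ContinuousOn h (Set.Icc (0 : ℝ) 1)) : Bdd h := by
  obtain ⟨C, hC⟩ := isCompact_Icc.exists_bound_of_continuousOn hh
  exact ⟨C, hC⟩

lemma M_add {b : ℕ} (hb : 2 ≤ b) {h k : ℝ → ℝ} (hh : Bdd h) (hk : Bdd k) :
    M b (h + k) = M b h + M b k := by
  unfold M
  rw [← (M_summable hb hh).tsum_add (M_summable hb hk)]
  simp only [map_add, Pi.add_apply]

lemma M_smul {b : ℕ} (h : ℝ → ℝ) (c : ℝ) :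
    M b (c • h) = c * M b h := by
  unfold M
  rw [← tsum_mul_left]
  simp only [map_smul, Pi.smul_apply, smul_eq_mul]

lemma M_sub {b : ℕ} (hb : 2 ≤ b) {h k : ℝ → ℝ} (hh : Bdd h) (hk : Bdd k) :
    M b (h - k) = M b h - M b k := by
  have : h - k = h + (-1 : ℝ) • k := by funext x; simp [sub_eq_add_neg]
  rw [this, M_add hb hh (hk.smul _), M_smul]; ring

lemma Bdd.congr {h k : ℝ → ℝ} (hh : Bdd h) (he : ∀ x ∈ Set.Icc (0 : ℝ) 1, h x = k x) : Bdd k := by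
  obtain ⟨C, hC⟩ := hh
  exact ⟨C, fun x hx => by rw [← he x hx]; exact hC x hx⟩

lemma M_congr {b : ℕ} (hb : 2 ≤ b) {h k : ℝ → ℝ} (hh : Bdd h)
    (he : ∀ x ∈ Set.Icc (0 : ℝ) 1, h x = k x) : M b h = M b k := by
  have h1 := M_sub hb hh (hh.congr he)
  have h2 : |M b (h - k)| ≤ 0 * b := M_bound hb (fun x hx => by simp [he x hx])
  rw [zero_mul] at h2
  have h3 := abs_nonpos_iff.1 h2
  linarith

lemma M_step {b : ℕ} {h : ℝ → ℝ} (hs : Summable fun l : ℕ => ((S b) ^ l) (S b h) 0) :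
    M b h = h 0 + M b (S b h) := by
  have h1 : ∀ l : ℕ, ((S b) ^ (l + 1)) h 0 = ((S b) ^ l) (S b h) 0 := by
    intro l
    rw [pow_succ, Module.End.mul_apply]
  have hs' : Summable fun l : ℕ => ((S b) ^ l) h 0 := by
    rw [← summable_nat_add_iff 1]
    simpa only [h1] using hs
  unfold M
  rw [hs'.tsum_eq_zero_add]
  simp only [h1]
  simp

lemma M_step' {b : ℕ} (hb : 2 ≤ b) {h : ℝ → ℝ} (hh : Bdd h) :
    M b h = h 0 + M b (S b h) := M_step (M_summable hb (hh.S hb))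

lemma Bdd_pow (n : ℕ) : Bdd (fun x : ℝ => x ^ n) := by
  apply Bdd.of_cont; fun_prop

lemma sum1 (b : ℕ) (hb : 1 ≤ b) : ∑ a ∈ Finset.Ico 1 b, (a : ℝ) = b * (b - 1) / 2 := by
  induction b, hb using Nat.le_induction with
  | base => simp
  | succ n hn ih => rw [Finset.sum_Ico_succ_top hn, ih]; push_cast; ring

lemma sum2 (b : ℕ) (hb : 1 ≤ b) :
    ∑ a ∈ Finset.Ico 1 b, (a : ℝ) ^ 2 = b * (b - 1) * (2 * b - 1) / 6 := by
  induction b, hb using Nat.le_induction with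
  | base => simp
  | succ n hn ih => rw [Finset.sum_Ico_succ_top hn, ih]; push_cast; ring

lemma sum3 (b : ℕ) (hb : 1 ≤ b) :
    ∑ a ∈ Finset.Ico 1 b, (a : ℝ) ^ 3 = (b * (b - 1) / 2) ^ 2 := by
  induction b, hb using Nat.le_induction with
  | base => simp
  | succ n hn ih => rw [Finset.sum_Ico_succ_top hn, ih]; push_cast; ring

lemma sum0 (b : ℕ) (hb : 1 ≤ b) (c : ℝ) :
    ∑ _a ∈ Finset.Ico 1 b, c = (b - 1) * c := by
  rw [Finset.sum_const, Nat.card_Ico, nsmul_eq_mul, Nat.cast_sub hb]; simp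

lemma M_zero_pow {b : ℕ} (hb : 2 ≤ b) : M b (fun x => x ^ 0) = b := by
  have hb0 : (0 : ℝ) < b := by exact_mod_cast (by omega : 0 < b)
  have h1 := M_step' hb (Bdd_pow 0)
  have h2 : S b (fun x => x ^ 0) = (1 - 1 / (b : ℝ)) • (fun x => x ^ 0) := by
    funext x
    simp only [S_apply, Pi.smul_apply, smul_eq_mul, pow_zero]
    rw [sum0 b (by omega)]
    field_simp
  rw [h2, M_smul] at h1
  generalize M b (fun x => x ^ 0) = u0 at *
  field_simp at h1
  linarith

lemma M_one_pow {b : ℕ} (hb : 2 ≤ b) :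
    M b (fun x => x ^ 1) * ((b : ℝ) ^ 2 - b + 1) = b * b * (b - 1) / 2 := by
  have hb0 : (0 : ℝ) < b := by exact_mod_cast (by omega : 0 < b)
  have h1 := M_step' hb (Bdd_pow 1)
  have h2 : S b (fun x => x ^ 1) = (b * (b - 1) / 2 / b ^ 2 : ℝ) • (fun x => x ^ 0) +
      ((b - 1) / b ^ 2 : ℝ) • (fun x => x ^ 1) := by
    funext x
    simp only [S_apply, Pi.add_apply, Pi.smul_apply, smul_eq_mul, pow_zero, pow_one]
    rw [← Finset.sum_div, Finset.sum_add_distrib, sum1 b (by omega), sum0 b (by omega)]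
    field_simp
  rw [h2, M_add hb ((Bdd_pow 0).smul _) ((Bdd_pow 1).smul _), M_smul, M_smul, M_zero_pow hb] at h1
  generalize M b (fun x => x ^ 1) = u1 at *
  field_simp at h1
  linarith

lemma M_two_pow {b : ℕ} (hb : 2 ≤ b) :
    M b (fun x => x ^ 2) * ((b : ℝ) ^ 3 - b + 1) = b * (b * (b - 1) * (2 * b - 1) / 6) +
      b * (b - 1) * M b (fun x => x ^ 1) := by
  have hb0 : (0 : ℝ) < b := by exact_mod_cast (by omega : 0 < b)
  have h1 := M_step' hb (Bdd_pow 2)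
  have h2 : S b (fun x => x ^ 2) = (b * (b - 1) * (2 * b - 1) / 6 / b ^ 3 : ℝ) • (fun x => x ^ 0) +
      ((b * (b - 1) / b ^ 3 : ℝ) • (fun x => x ^ 1) + ((b - 1) / b ^ 3 : ℝ) • (fun x => x ^ 2)) := by
    funext x
    simp only [S_apply, Pi.add_apply, Pi.smul_apply, smul_eq_mul, pow_zero, pow_one]
    have : ∀ a : ℕ, (((a : ℝ) + x) / b) ^ 2 = ((a : ℝ) ^ 2 + (a : ℝ) * (2 * x) + x ^ 2) / b ^ 2 := by
      intro a; rw [div_pow]; ring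
    simp only [this]
    rw [← Finset.sum_div, Finset.sum_add_distrib, Finset.sum_add_distrib, ← Finset.sum_mul,
      sum1 b (by omega), sum2 b (by omega), sum0 b (by omega)]
    field_simp
    ring
  rw [h2, M_add hb ((Bdd_pow 0).smul _) (((Bdd_pow 1).smul _).add ((Bdd_pow 2).smul _)),
    M_add hb ((Bdd_pow 1).smul _) ((Bdd_pow 2).smul _),
    M_smul, M_smul, M_smul, M_zero_pow hb] at h1
  generalize M b (fun x => x ^ 2) = u2 at *
  generalize M b (fun x => x ^ 1) = u1 at *
  field_simp at h1
  linarith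

lemma M_three_pow {b : ℕ} (hb : 2 ≤ b) :
    M b (fun x => x ^ 3) * ((b : ℝ) ^ 4 - b + 1) = b * (b * (b - 1) / 2) ^ 2 +
      3 * (b * (b - 1) * (2 * b - 1) / 6) * M b (fun x => x ^ 1) +
      3 * (b * (b - 1) / 2) * M b (fun x => x ^ 2) := by
  have hb0 : (0 : ℝ) < b := by exact_mod_cast (by omega : 0 < b)
  have h1 := M_step' hb (Bdd_pow 3)
  have h2 : S b (fun x => x ^ 3) = ((b * (b - 1) / 2) ^ 2 / b ^ 4 : ℝ) • (fun x => x ^ 0) +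
      ((3 * (b * (b - 1) * (2 * b - 1) / 6) / b ^ 4 : ℝ) • (fun x => x ^ 1) +
      ((3 * (b * (b - 1) / 2) / b ^ 4 : ℝ) • (fun x => x ^ 2) +
       ((b - 1) / b ^ 4 : ℝ) • (fun x => x ^ 3))) := by
    funext x
    simp only [S_apply, Pi.add_apply, Pi.smul_apply, smul_eq_mul, pow_zero, pow_one]
    have : ∀ a : ℕ, (((a : ℝ) + x) / b) ^ 3 =
        ((a : ℝ) ^ 3 + (a : ℝ) ^ 2 * (3 * x) + (a : ℝ) * (3 * x ^ 2) + x ^ 3) / b ^ 3 := by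
      intro a; rw [div_pow]; ring
    simp only [this]
    rw [← Finset.sum_div, Finset.sum_add_distrib, Finset.sum_add_distrib, Finset.sum_add_distrib,
      ← Finset.sum_mul, ← Finset.sum_mul,
      sum1 b (by omega), sum2 b (by omega), sum3 b (by omega), sum0 b (by omega)]
    field_simp
    ring
  rw [h2, M_add hb ((Bdd_pow 0).smul _)
      (((Bdd_pow 1).smul _).add (((Bdd_pow 2).smul _).add ((Bdd_pow 3).smul _))),
    M_add hb ((Bdd_pow 1).smul _) (((Bdd_pow 2).smul _).add ((Bdd_pow 3).smul _)),
    M_add hb ((Bdd_pow 2).smul _) ((Bdd_pow 3).smul _),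
    M_smul, M_smul, M_smul, M_smul, M_zero_pow hb] at h1
  generalize M b (fun x => x ^ 3) = u3 at *
  generalize M b (fun x => x ^ 2) = u2 at *
  generalize M b (fun x => x ^ 1) = u1 at *
  field_simp at h1
  linarith

/-- The full averaging operator. -/
noncomputable def T (b : ℕ) (h : ℝ → ℝ) : ℝ → ℝ :=
  fun x => (∑ a ∈ Finset.range b, h (((a : ℝ) + x) / b)) / b

lemma T_eq {b : ℕ} (hb : 2 ≤ b) (h : ℝ → ℝ) :
    T b h = S b h + (1 / (b : ℝ)) • (fun x => h (x / b)) := by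
  funext x
  simp only [T, S_apply, Pi.add_apply, Pi.smul_apply, smul_eq_mul]
  rw [Finset.range_eq_Ico, Finset.sum_eq_sum_Ico_succ_bot (by omega : 0 < b)]
  simp only [Nat.cast_zero, zero_add]
  ring

/-- Lipschitz on the unit interval -/
def LipU (L : ℝ) (h : ℝ → ℝ) : Prop :=
  ∀ x ∈ Set.Icc (0 : ℝ) 1, ∀ y ∈ Set.Icc (0 : ℝ) 1, |h x - h y| ≤ L * |x - y|

lemma LipU.cont {L : ℝ} {h : ℝ → ℝ} (hh : LipU L h) :
    ContinuousOn h (Set.Icc (0 : ℝ) 1) := by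
  have : LipschitzOnWith (Real.toNNReal L) h (Set.Icc (0 : ℝ) 1) := by
    apply LipschitzOnWith.of_dist_le_mul
    intro x hx y hy
    rw [Real.dist_eq, Real.dist_eq]
    refine (hh x hx y hy).trans ?_
    apply mul_le_mul_of_nonneg_right _ (abs_nonneg _)
    exact Real.le_coe_toNNReal L
  exact this.continuousOn

lemma T_lip {b : ℕ} (hb : 2 ≤ b) {L : ℝ} {h : ℝ → ℝ} (hh : LipU L h) : LipU (L / b) (T b h) := by
  intro x hx y hy
  have hb0 : (0 : ℝ) < b := by exact_mod_cast (by omega : 0 < b)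
  simp only [T]
  rw [← sub_div, ← Finset.sum_sub_distrib, abs_div, abs_of_pos hb0, div_le_iff₀ hb0]
  calc |∑ a ∈ Finset.range b, (h (((a : ℝ) + x) / b) - h (((a : ℝ) + y) / b))|
      ≤ ∑ a ∈ Finset.range b, |h (((a : ℝ) + x) / b) - h (((a : ℝ) + y) / b)| :=
        Finset.abs_sum_le_sum_abs _ _
    _ ≤ ∑ a ∈ Finset.range b, L / b * |x - y| := by
        apply Finset.sum_le_sum
        intro a ha
        have hab := Finset.mem_range.1 ha
        refine (hh _ (mem_unit hab hx) _ (mem_unit hab hy)).trans (le_of_eq ?_)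
        rw [← sub_div, abs_div, abs_of_pos hb0, add_sub_add_left_eq_sub]
        ring
    _ = L / b * |x - y| * b := by
        rw [Finset.sum_const, Finset.card_range, nsmul_eq_mul]; ring

lemma int_T {b : ℕ} (hb : 2 ≤ b) {h : ℝ → ℝ} (hh : ContinuousOn h (Set.Icc (0 : ℝ) 1)) :
    ∫ x in (0 : ℝ)..1, T b h x = ∫ x in (0 : ℝ)..1, h x := by
  have hb0 : (0 : ℝ) < b := by exact_mod_cast (by omega : 0 < b)
  have hc : ∀ a ∈ Finset.range b, ContinuousOn (fun x : ℝ => h (((a : ℝ) + x) / b))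
      (Set.Icc (0 : ℝ) 1) := by
    intro a ha
    apply hh.comp (by fun_prop)
    intro x hx
    exact mem_unit (Finset.mem_range.1 ha) hx
  simp only [T]
  rw [intervalIntegral.integral_div, intervalIntegral.integral_finsetSum]
  · have h1 : ∀ a : ℕ, ∫ x in (0 : ℝ)..1, h (((a : ℝ) + x) / b) =
        b * ∫ x in ((a : ℝ) / b)..(((a + 1 : ℕ) : ℝ) / b), h x := by
      intro a
      have := intervalIntegral.integral_comp_div_add (a := 0) (b := 1) (fun x => h x) (ne_of_gt hb0)
        ((a : ℝ) / b)
      simp only [smul_eq_mul] at this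
      convert this using 3
      · congr 1; ring
      · ring
      · push_cast; ring
    simp only [h1]
    rw [← Finset.mul_sum, intervalIntegral.sum_integral_adjacent_intervals]
    · simp only [Nat.cast_zero, zero_div, div_self (ne_of_gt hb0)]
      field_simp
    · intro k hk
      apply ContinuousOn.intervalIntegrable
      apply hh.mono
      have hk1 : ((k + 1 : ℕ) : ℝ) ≤ b := by exact_mod_cast hk
      rw [Set.uIcc_of_le (by gcongr; simp)]
      apply Set.Icc_subset_Icc
      · positivity
      · rw [div_le_one hb0]; exact hk1
  · intro a ha
    apply ContinuousOn.intervalIntegrable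
    rw [Set.uIcc_of_le zero_le_one]
    exact hc a ha

/-- The error functional. -/
noncomputable def E (b : ℕ) (h : ℝ → ℝ) : ℝ := M b h - b * ∫ x in (0 : ℝ)..1, h x

lemma const_eq (c : ℝ) : (fun _ : ℝ => c) = c • (fun x : ℝ => x ^ 0) := by
  funext x; simp

lemma Bdd_const (c : ℝ) : Bdd (fun _ => c) := ⟨|c|, fun _ _ => le_rfl⟩

lemma M_const {b : ℕ} (hb : 2 ≤ b) (c : ℝ) : M b (fun _ => c) = c * b := by
  rw [const_eq, M_smul, M_zero_pow hb]

lemma E_base {b : ℕ} (hb : 2 ≤ b) {L : ℝ} (hL : 0 ≤ L) {h : ℝ → ℝ} (hh : LipU L h) :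
    |E b h| ≤ 2 * b * L := by
  have hb0 : (0 : ℝ) < b := by exact_mod_cast (by omega : 0 < b)
  have hB := Bdd.of_cont hh.cont
  have key : ∀ x ∈ Set.Icc (0 : ℝ) 1, |h x - h 0| ≤ L := by
    intro x hx
    refine (hh x hx 0 zero_mem_unit).trans ?_
    rw [sub_zero, abs_of_nonneg hx.1]
    exact mul_le_of_le_one_right hL hx.2
  have h1 : |M b (h - fun _ => h 0)| ≤ L * b := M_bound hb key
  rw [M_sub hb hB (Bdd_const _), M_const hb] at h1
  have h2 : ‖∫ x in (0 : ℝ)..1, (h x - h 0)‖ ≤ L * |1 - 0| := by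
    apply intervalIntegral.norm_integral_le_of_norm_le_const
    intro x hx
    rw [Set.uIoc_of_le zero_le_one] at hx
    exact key x ⟨hx.1.le, hx.2⟩
  rw [intervalIntegral.integral_sub _ (by simp), intervalIntegral.integral_const] at h2
  · simp only [sub_zero, abs_one, mul_one, one_smul, Real.norm_eq_abs] at h2
    have : E b h = (M b h - h 0 * b) - b * ((∫ x in (0 : ℝ)..1, h x) - h 0) := by
      unfold E; ring
    rw [this]
    refine (abs_sub _ _).trans ?_
    rw [abs_mul, abs_of_pos hb0]
    have := mul_le_mul_of_nonneg_left h2 hb0.le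
    linarith
  · apply ContinuousOn.intervalIntegrable
    rw [Set.uIcc_of_le zero_le_one]
    exact hh.cont

lemma div_mem_unit {b : ℕ} (hb : 2 ≤ b) {x : ℝ} (hx : x ∈ Set.Icc (0 : ℝ) 1) :
    x / b ∈ Set.Icc (0 : ℝ) 1 := by
  have := mem_unit (by omega : 0 < b) hx
  simpa using this

lemma Bdd.div {b : ℕ} (hb : 2 ≤ b) {h : ℝ → ℝ} (hh : Bdd h) : Bdd (fun x => h (x / b)) := by
  obtain ⟨C, hC⟩ := hh
  exact ⟨C, fun x hx => hC _ (div_mem_unit hb hx)⟩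

lemma M_T {b : ℕ} (hb : 2 ≤ b) {h : ℝ → ℝ} (hh : Bdd h) :
    M b (T b h) = M b h - h 0 + (1 / b) * M b (fun x => h (x / b)) := by
  rw [T_eq hb, M_add hb (hh.S hb) ((hh.div hb).smul _), M_smul, M_step' hb hh]
  ring

lemma E_step {b : ℕ} (hb : 2 ≤ b) {L : ℝ} (hL : 0 ≤ L) {h : ℝ → ℝ} (hh : LipU L h) :
    |E b h| ≤ |E b (T b h)| + L / b := by
  have hb0 : (0 : ℝ) < b := by exact_mod_cast (by omega : 0 < b)
  have hB := Bdd.of_cont hh.cont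
  have h1 : |M b ((fun x => h (x / b)) - fun _ => h 0)| ≤ (L / b) * b := by
    apply M_bound hb
    intro x hx
    refine (hh _ (div_mem_unit hb hx) 0 zero_mem_unit).trans ?_
    rw [sub_zero, abs_of_nonneg (div_mem_unit hb hx).1, div_eq_mul_inv, div_eq_mul_inv]
    apply mul_le_mul_of_nonneg_left _ hL
    exact mul_le_of_le_one_left (by positivity) hx.2
  rw [M_sub hb (hB.div hb) (Bdd_const _), M_const hb] at h1
  have h2 : E b h = E b (T b h) - (1 / b) * (M b (fun x => h (x / b)) - h 0 * b) := by
    unfold E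
    rw [int_T hb hh.cont, M_T hb hB]
    field_simp
    ring
  rw [h2]
  refine (abs_sub _ _).trans ?_
  rw [abs_mul, abs_of_pos (by positivity : (0 : ℝ) < 1 / b)]
  have := mul_le_mul_of_nonneg_left h1 (by positivity : (0 : ℝ) ≤ 1 / b)
  have h3 : 1 / (b : ℝ) * (L / b * b) = L / b := by field_simp
  linarith

lemma E_lip {b : ℕ} (hb : 2 ≤ b) {L : ℝ} (hL : 0 ≤ L) {h : ℝ → ℝ} (hh : LipU L h) :
    |E b h| ≤ 4 * L / b := by
  have hb0 : (2 : ℝ) ≤ b := by exact_mod_cast hb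
  have hb1 : (0 : ℝ) < b := by linarith
  have h1 := T_lip hb hh
  have h2 := T_lip hb h1
  have hL1 : 0 ≤ L / b := by positivity
  have hL2 : 0 ≤ L / b / b := by positivity
  have e0 := E_step hb hL hh
  have e1 := E_step hb hL1 h1
  have e2 := E_base hb hL2 h2
  have e3 : 2 * b * (L / b / b) = 2 * (L / b) := by field_simp
  have e4 : L / b / b ≤ L / b := div_le_self hL1 (by linarith)
  have e5 : 4 * L / b = 4 * (L / b) := by ring
  linarith

/-- term of the digamma series -/
noncomputable def q (n : ℕ) (y : ℝ) : ℝ := 1 / ((n : ℝ) + 1) - 1 / ((n : ℝ) + 1 + y)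

/-- `ψ(1+y) + γ` -/
noncomputable def p (y : ℝ) : ℝ := ∑' n : ℕ, q n y

/-- remainder term -/
noncomputable def r (n : ℕ) (y : ℝ) : ℝ := y ^ 4 / (((n : ℝ) + 1) ^ 4 * ((n : ℝ) + 1 + y))

noncomputable def R (y : ℝ) : ℝ := ∑' n : ℕ, r n y

lemma summable_zeta {s : ℕ} (hs : 2 ≤ s) : Summable fun n : ℕ => 1 / ((n : ℝ) + 1) ^ s := by
  have := (summable_nat_add_iff 1).2 (Real.summable_one_div_nat_pow.2 (by omega : 1 < s))
  simpa using this

lemma q_bound (n : ℕ) {y : ℝ} (hy : y ∈ Set.Icc (0 : ℝ) 1) :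
    ‖q n y‖ ≤ 1 / ((n : ℝ) + 1) ^ 2 := by
  have hn : (0 : ℝ) < (n : ℝ) + 1 := by positivity
  have hy0 := hy.1
  have hy1 := hy.2
  have h1 : q n y = y / (((n : ℝ) + 1) * ((n : ℝ) + 1 + y)) := by
    unfold q; field_simp; ring
  rw [h1, Real.norm_of_nonneg (by positivity)]
  apply div_le_div₀ zero_le_one hy1 (by positivity)
  nlinarith

lemma q_summable {y : ℝ} (hy : y ∈ Set.Icc (0 : ℝ) 1) : Summable fun n => q n y :=
  Summable.of_norm_bounded (summable_zeta le_rfl) (fun n => q_bound n hy)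

lemma r_diff (n : ℕ) {c y z : ℝ} (hc : c ≤ 1) (hy : y ∈ Set.Icc (0 : ℝ) c)
    (hz : z ∈ Set.Icc (0 : ℝ) c) :
    |r n y - r n z| ≤ 7 * c ^ 3 * |y - z| * (1 / ((n : ℝ) + 1) ^ 2) := by
  obtain ⟨hy0, hy1⟩ := hy
  obtain ⟨hz0, hz1⟩ := hz
  have hc0 : 0 ≤ c := hy0.trans hy1
  set m : ℝ := (n : ℝ) + 1 with hm
  have hm1 : 1 ≤ m := by simp [hm]
  have hm0 : 0 < m := by linarith
  have e : r n y - r n z = (y - z) * ((m * ((y + z) * (y ^ 2 + z ^ 2)) + y * z * (y ^ 2 + y * z + z ^ 2))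
      / (m ^ 4 * (m + y) * (m + z))) := by
    unfold r
    rw [← hm]
    have : m + y ≠ 0 := by positivity
    have : m + z ≠ 0 := by positivity
    field_simp
    ring
  have hnn : 0 ≤ m * ((y + z) * (y ^ 2 + z ^ 2)) + y * z * (y ^ 2 + y * z + z ^ 2) := by positivity
  rw [e, abs_mul, abs_of_nonneg (a := _ / _) (by positivity)]
  have hnum : m * ((y + z) * (y ^ 2 + z ^ 2)) + y * z * (y ^ 2 + y * z + z ^ 2) ≤ m * (7 * c ^ 3) := by
    have a1 : (y + z) * (y ^ 2 + z ^ 2) ≤ (c + c) * (c ^ 2 + c ^ 2) := by gcongr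
    have a2 : y * z * (y ^ 2 + y * z + z ^ 2) ≤ c * c * (c ^ 2 + c * c + c ^ 2) := by gcongr
    have a3 : c * c * (c ^ 2 + c * c + c ^ 2) ≤ m * (3 * c ^ 3) := by
      have : c * c ^ 3 ≤ m * c ^ 3 := by gcongr; linarith
      nlinarith
    have a4 : m * ((y + z) * (y ^ 2 + z ^ 2)) ≤ m * ((c + c) * (c ^ 2 + c ^ 2)) := by gcongr
    nlinarith
  have hden : m ^ 3 ≤ m ^ 4 * (m + y) * (m + z) := by
    have b1 : m ^ 3 ≤ m ^ 4 := pow_le_pow_right₀ hm1 (by norm_num)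
    have b2 : m ^ 4 * 1 * 1 ≤ m ^ 4 * (m + y) * (m + z) := by
      gcongr <;> linarith
    linarith
  have hfrac : (m * ((y + z) * (y ^ 2 + z ^ 2)) + y * z * (y ^ 2 + y * z + z ^ 2))
      / (m ^ 4 * (m + y) * (m + z)) ≤ m * (7 * c ^ 3) / m ^ 3 :=
    div_le_div₀ (by positivity) hnum (by positivity) hden
  calc _ ≤ |y - z| * (m * (7 * c ^ 3) / m ^ 3) := by gcongr
    _ = _ := by field_simp

lemma r_zero (n : ℕ) : r n 0 = 0 := by simp [r]

lemma r_summable {y : ℝ} (hy : y ∈ Set.Icc (0 : ℝ) 1) : Summable fun n => r n y := by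
  refine Summable.of_norm_bounded ((summable_zeta le_rfl).mul_left (7 * 1 ^ 3 * |y - 0|)) ?_
  intro n
  have := r_diff n le_rfl hy zero_mem_unit
  rwa [r_zero, sub_zero (r n y)] at this

lemma R_diff {c y z : ℝ} (hc : c ≤ 1) (hy : y ∈ Set.Icc (0 : ℝ) c)
    (hz : z ∈ Set.Icc (0 : ℝ) c) :
    |R y - R z| ≤ 7 * c ^ 3 * |y - z| * zetaR 2 := by
  unfold R
  rw [← (r_summable ⟨hy.1, hy.2.trans hc⟩).tsum_sub (r_summable ⟨hz.1, hz.2.trans hc⟩)]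
  exact tsum_of_norm_bounded (f := fun n => r n y - r n z)
    ((summable_zeta le_rfl).hasSum.mul_left (7 * c ^ 3 * |y - z|))
    (fun n => r_diff n hc hy hz)

lemma p_eq {y : ℝ} (hy : y ∈ Set.Icc (0 : ℝ) 1) :
    p y = zetaR 2 * y - zetaR 3 * y ^ 2 + zetaR 4 * y ^ 3 - R y := by
  have h2 := (summable_zeta (le_refl 2)).hasSum.mul_right y
  have h3 := (summable_zeta (by norm_num : 2 ≤ 3)).hasSum.mul_right (y ^ 2)
  have h4 := (summable_zeta (by norm_num : 2 ≤ 4)).hasSum.mul_right (y ^ 3)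
  have hR := (r_summable hy).hasSum
  have := ((h2.sub h3).add h4).sub hR
  have h5 := this.tsum_eq
  unfold p zetaR R
  rw [← h5]
  congr 1
  funext n
  have hn : (0 : ℝ) < (n : ℝ) + 1 := by positivity
  have : (0 : ℝ) < (n : ℝ) + 1 + y := by linarith [hy.1]
  unfold q r
  field_simp
  ring

lemma zeta_nonneg (s : ℕ) : 0 ≤ zetaR s := tsum_nonneg (fun n => by positivity)

lemma R_lip {b : ℕ} (hb : 2 ≤ b) : LipU (7 * zetaR 2 / b ^ 4) (fun x => R (x / b)) := by
  intro x hx y hy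
  have hb0 : (0 : ℝ) < b := by exact_mod_cast (by omega : 0 < b)
  have hb1 : (1 : ℝ) ≤ b := by exact_mod_cast (by omega : 1 ≤ b)
  have key : ∀ x ∈ Set.Icc (0 : ℝ) 1, x / b ∈ Set.Icc (0 : ℝ) (1 / b) := by
    intro x hx
    exact ⟨(div_mem_unit hb hx).1, by gcongr; exact hx.2⟩
  refine (R_diff (c := 1 / b) (by rw [div_le_one hb0]; exact hb1) (key x hx) (key y hy)).trans
    (le_of_eq ?_)
  rw [← sub_div, abs_div, abs_of_pos hb0]
  field_simp

lemma R_cont : ContinuousOn R (Set.Icc (0 : ℝ) 1) := by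
  have : LipU (7 * zetaR 2) R := by
    intro x hx y hy
    have := R_diff le_rfl hx hy
    nlinarith
  exact this.cont

lemma p_cont : ContinuousOn p (Set.Icc (0 : ℝ) 1) := by
  have : ContinuousOn (fun y => zetaR 2 * y - zetaR 3 * y ^ 2 + zetaR 4 * y ^ 3 - R y)
      (Set.Icc (0 : ℝ) 1) := by
    apply ContinuousOn.sub _ R_cont
    fun_prop
  exact this.congr (fun y hy => p_eq hy)

lemma p_zero : p 0 = 0 := by simp [p, q]

lemma q_sum (N : ℕ) (y : ℝ) : ∑ n ∈ Finset.range N, q n y =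
    (harmonic N : ℝ) - ∑ n ∈ Finset.range N, 1 / ((n : ℝ) + 1 + y) := by
  unfold q
  rw [Finset.sum_sub_distrib, harmonic]
  push_cast
  simp

/-- Euler-Gauss multiplication in partial-sum form -/
lemma block_sum (b N : ℕ) (φ : ℕ → ℝ) :
    ∑ a ∈ Finset.range b, ∑ n ∈ Finset.range N, φ (b * (n + 1) + a) =
      ∑ m ∈ Finset.Ico b (b * (N + 1)), φ m := by
  rw [Finset.sum_comm]
  induction N with
  | zero => simp
  | succ N ih =>
    rw [Finset.sum_range_succ, ih, ← Finset.sum_Ico_consecutive φ (m := b) (n := b * (N + 1))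
      (k := b * (N + 1 + 1))
      (by nlinarith) (by nlinarith)]
    congr 1
    rw [Finset.sum_Ico_eq_sum_range]
    have : b * (N + 1 + 1) - b * (N + 1) = b := by rw [← Nat.mul_sub]; simp
    rw [this]

lemma partial_T {b : ℕ} (hb : 2 ≤ b) (N : ℕ) (x : ℝ) (hx : 0 ≤ x) :
    T b (fun y => ∑ n ∈ Finset.range N, q n y) x =
      (harmonic N : ℝ) - ∑ m ∈ Finset.Ico b (b * (N + 1)), 1 / ((m : ℝ) + x) := by
  have hb0 : (0 : ℝ) < b := by exact_mod_cast (by omega : 0 < b)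
  simp only [T, q_sum]
  rw [Finset.sum_sub_distrib, Finset.sum_const, Finset.card_range, nsmul_eq_mul, sub_div,
    mul_div_cancel_left₀ _ (ne_of_gt hb0)]
  congr 1
  rw [← block_sum, Finset.sum_div]
  apply Finset.sum_congr rfl
  intro a _
  rw [Finset.sum_div]
  apply Finset.sum_congr rfl
  intro n _
  push_cast
  have : (0 : ℝ) < (n : ℝ) + 1 + (a + x) / b := by positivity
  have : (0 : ℝ) < (b : ℝ) * (n + 1) + a + x := by positivity
  field_simp
  ring

lemma harm_lim {b : ℕ} (hb : 2 ≤ b) :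
    Tendsto (fun N : ℕ => (harmonic (b * N) : ℝ) - harmonic N) atTop (nhds (Real.log b)) := by
  have h1 := Real.tendsto_harmonic_sub_log
  have hm : Tendsto (fun N : ℕ => b * N) atTop atTop :=
    tendsto_id.const_mul_atTop' (by omega)
  have h2 := ((h1.comp hm).sub h1).add_const (Real.log b)
  rw [sub_self, zero_add] at h2
  refine h2.congr' ?_
  filter_upwards [eventually_ge_atTop 1] with N hN
  have hb0 : (b : ℝ) ≠ 0 := by exact_mod_cast (by omega : b ≠ 0)
  have hN0 : (N : ℝ) ≠ 0 := by exact_mod_cast (by omega : N ≠ 0)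
  simp only [Function.comp]
  push_cast
  rw [Real.log_mul hb0 hN0]
  ring

lemma tail_lim {b : ℕ} (hb : 2 ≤ b) {x : ℝ} (hx : 0 ≤ x) :
    Tendsto (fun N : ℕ => ∑ m ∈ Finset.Ico (b * N + 1) (b * (N + 1)), 1 / ((m : ℝ) + x))
      atTop (nhds 0) := by
  have h1 : Tendsto (fun N : ℕ => (b : ℝ) * (1 / ((N : ℝ) + 1))) atTop (nhds 0) := by
    simpa using tendsto_one_div_add_atTop_nhds_zero_nat.const_mul (b : ℝ)
  refine squeeze_zero (fun N => Finset.sum_nonneg (fun m _ => by positivity)) (fun N => ?_) h1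
  calc ∑ m ∈ Finset.Ico (b * N + 1) (b * (N + 1)), 1 / ((m : ℝ) + x)
      ≤ ∑ m ∈ Finset.Ico (b * N + 1) (b * (N + 1)), 1 / ((N : ℝ) + 1) := by
        apply Finset.sum_le_sum
        intro m hm
        have h := (Finset.mem_Ico.1 hm).1
        have h' : N + 1 ≤ m := by nlinarith
        have h'' : (N : ℝ) + 1 ≤ m := by exact_mod_cast h'
        apply one_div_le_one_div_of_le (by positivity)
        linarith
    _ ≤ _ := by
        rw [Finset.sum_const, Nat.card_Ico, nsmul_eq_mul]
        gcongr
        have : b * (N + 1) = b * N + b := by ring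
        omega

lemma gauss {b : ℕ} (hb : 2 ≤ b) {x : ℝ} (hx : x ∈ Set.Icc (0 : ℝ) 1) :
    p x - T b p x = Real.log b - ∑ a ∈ Finset.Ico 1 b, 1 / ((a : ℝ) + x) := by
  have hm : Tendsto (fun N : ℕ => b * N) atTop atTop :=
    tendsto_id.const_mul_atTop' (by omega)
  have h1 : Tendsto (fun N : ℕ => ∑ n ∈ Finset.range (b * N), q n x) atTop (nhds (p x)) :=
    (q_summable hx).hasSum.tendsto_sum_nat.comp hm
  have h2 : Tendsto (fun N : ℕ => T b (fun y => ∑ n ∈ Finset.range N, q n y) x) atTop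
      (nhds (T b p x)) := by
    simp only [T]
    apply Tendsto.div_const
    apply tendsto_finsetSum
    intro a ha
    exact (q_summable (mem_unit (Finset.mem_range.1 ha) hx)).hasSum.tendsto_sum_nat
  have h3 := h1.sub h2
  have h4 := ((harm_lim hb).sub_const (∑ a ∈ Finset.Ico 1 b, 1 / ((a : ℝ) + x))).add
    (tail_lim hb hx.1)
  rw [add_zero] at h4
  refine tendsto_nhds_unique h3 (h4.congr' ?_)
  filter_upwards [eventually_ge_atTop 1] with N hN
  rw [partial_T hb N x hx.1, q_sum]
  have e1 : ∑ n ∈ Finset.range (b * N), 1 / ((n : ℝ) + 1 + x) =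
      ∑ m ∈ Finset.Ico 1 (b * N + 1), 1 / ((m : ℝ) + x) := by
    rw [Finset.sum_Ico_eq_sum_range]
    apply Finset.sum_congr (by simp)
    intro n _
    push_cast
    rw [add_comm (1 : ℝ)]
  have hbN : b ≤ b * N := Nat.le_mul_of_pos_right _ hN
  have hbN' : b * (N + 1) = b * N + b := by ring
  have e2 := Finset.sum_Ico_consecutive (fun m : ℕ => 1 / ((m : ℝ) + x)) (m := 1) (n := b)
    (k := b * (N + 1)) (by omega) (by omega)
  have e3 := Finset.sum_Ico_consecutive (fun m : ℕ => 1 / ((m : ℝ) + x)) (m := 1) (n := b * N + 1)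
    (k := b * (N + 1)) (by omega) (by omega)
  rw [e1]
  linarith

lemma q_int (n : ℕ) {y : ℝ} (hy : 0 < y) : ∫ x in (0 : ℝ)..1, q n (x * y) =
    1 / ((n : ℝ) + 1) - (Real.log (y + (n + 1 : ℕ)) - Real.log (n + 1 : ℕ)) / y := by
  have hd : ∀ x ∈ Set.uIcc (0 : ℝ) 1, HasDerivAt
      (fun x : ℝ => x * (1 / ((n : ℝ) + 1)) - Real.log ((n : ℝ) + 1 + x * y) / y) (q n (x * y)) x := by
    intro x hx
    rw [Set.uIcc_of_le zero_le_one] at hx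
    have hx0 := hx.1
    have hpos : (0 : ℝ) < (n : ℝ) + 1 + x * y := by positivity
    have h1 : HasDerivAt (fun x : ℝ => (n : ℝ) + 1 + x * y) y x := by
      simpa using ((hasDerivAt_id x).mul_const y).const_add ((n : ℝ) + 1)
    have h2 := ((hasDerivAt_id x).mul_const (1 / ((n : ℝ) + 1))).sub
      ((h1.log hpos.ne').div_const y)
    have h3 : q n (x * y) = 1 * (1 / ((n : ℝ) + 1)) - y / ((n : ℝ) + 1 + x * y) / y := by
      unfold q
      field_simp
    rw [h3]
    exact h2
  rw [intervalIntegral.integral_eq_sub_of_hasDerivAt hd]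
  · push_cast
    simp only [one_mul, zero_mul, add_zero]
    rw [add_comm ((n : ℝ) + 1) y]
    ring
  · apply ContinuousOn.intervalIntegrable
    unfold q
    apply ContinuousOn.sub (by fun_prop)
    apply ContinuousOn.div (by fun_prop) (by fun_prop)
    intro x hx
    rw [Set.uIcc_of_le zero_le_one] at hx
    have hx0 := hx.1
    positivity

lemma int_p {y : ℝ} (hy : 0 < y) (hy1 : y ≤ 1) : ∫ x in (0 : ℝ)..1, p (x * y) =
    Real.log (Real.Gamma (1 + y)) / y + Real.eulerMascheroniConstant := by
  have hmem : ∀ x ∈ Set.Icc (0 : ℝ) 1, x * y ∈ Set.Icc (0 : ℝ) 1 := by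
    intro x hx
    exact ⟨mul_nonneg hx.1 hy.le, mul_le_one₀ hx.2 hy.le hy1⟩
  have hS : HasSum (fun n => ∫ x in (0 : ℝ)..1, q n (x * y)) (∫ x in (0 : ℝ)..1, p (x * y)) := by
    refine intervalIntegral.hasSum_integral_of_dominated_convergence
      (fun n _ => 1 / ((n : ℝ) + 1) ^ 2) ?_ ?_ ?_ ?_ ?_
    · intro n
      unfold q
      exact (by fun_prop : Measurable fun x : ℝ =>
        1 / ((n : ℝ) + 1) - 1 / ((n : ℝ) + 1 + x * y)).aestronglyMeasurable
    · intro n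
      refine MeasureTheory.ae_of_all _ (fun t ht => ?_)
      rw [Set.uIoc_of_le zero_le_one] at ht
      exact q_bound n (hmem t ⟨ht.1.le, ht.2⟩)
    · exact MeasureTheory.ae_of_all _ (fun t ht => summable_zeta le_rfl)
    · simp
    · refine MeasureTheory.ae_of_all _ (fun t ht => ?_)
      rw [Set.uIoc_of_le zero_le_one] at ht
      exact (q_summable (hmem t ⟨ht.1.le, ht.2⟩)).hasSum
  have h1 := hS.tendsto_sum_nat
  have hΓ : Tendsto (Real.BohrMollerup.logGammaSeq y) atTop (nhds (Real.log (Real.Gamma y))) := by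
    exact Real.BohrMollerup.tendsto_log_gamma hy
  have h2 := ((hΓ.add_const (Real.log y)).div_const y).add Real.tendsto_harmonic_sub_log
  have e : Real.log (Real.Gamma (1 + y)) = Real.log (Real.Gamma y) + Real.log y := by
    rw [add_comm 1 y, Real.Gamma_add_one hy.ne',
      Real.log_mul hy.ne' (Real.Gamma_pos_of_pos hy).ne', add_comm]
  rw [e]
  refine tendsto_nhds_unique h1 (h2.congr ?_)
  intro N
  simp only [q_int _ hy]
  rw [Finset.sum_sub_distrib, ← Finset.sum_div, Finset.sum_sub_distrib]
  unfold Real.BohrMollerup.logGammaSeq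
  rw [Finset.sum_range_succ']
  have e2 : Real.log (N.factorial : ℝ) = ∑ n ∈ Finset.range N, Real.log ((n + 1 : ℕ) : ℝ) := by
    rw [← Finset.prod_range_add_one_eq_factorial]
    push_cast
    rw [Real.log_prod]
    intro i _
    positivity
  have e3 : (harmonic N : ℝ) = ∑ n ∈ Finset.range N, 1 / ((n : ℝ) + 1) := by
    unfold harmonic; push_cast; simp
  rw [e2, e3]
  simp only [Nat.cast_zero, add_zero]
  field_simp
  ring

lemma range_mul_sum (b N : ℕ) (φ : ℕ → ℝ) :
    ∑ m ∈ Finset.range (b * N), φ m = ∑ m ∈ Finset.range N, ∑ a ∈ Finset.range b, φ (a + b * m) := by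
  induction N with
  | zero => simp
  | succ N ih =>
    rw [Finset.sum_range_succ, ← ih, mul_add, mul_one, Finset.sum_range_add]
    simp only [add_comm]

/-- Numbers with exactly `l` digits, all nonzero. -/
def good (b l m : ℕ) : Prop := (Nat.digits b m).length = l ∧ (Nat.digits b m).count 0 = 0

open Classical in
lemma good_sum {b : ℕ} (hb : 2 ≤ b) (l : ℕ) (φ : ℕ → ℝ) :
    ∑ m ∈ Finset.range (b ^ (l + 1)), (if good b (l + 1) m then φ m else 0) =
    ∑ m ∈ Finset.range (b ^ l), (if good b l m then ∑ a ∈ Finset.Ico 1 b, φ (a + b * m) else 0) := by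
  rw [pow_succ', range_mul_sum]
  apply Finset.sum_congr rfl
  intro m _
  rw [Finset.range_eq_Ico, Finset.sum_eq_sum_Ico_succ_bot (by omega : 0 < b)]
  have h0 : ¬ good b (l + 1) (0 + b * m) := by
    rintro ⟨h1, h2⟩
    rcases Nat.eq_zero_or_pos m with rfl | hm
    · simp at h1
    · rw [Nat.digits_add b (by omega) 0 m (by omega) (Or.inr hm.ne')] at h2
      simp at h2
  rw [if_neg h0, zero_add]
  have h1 : ∀ a ∈ Finset.Ico (0 + 1) b, (if good b (l + 1) (a + b * m) then φ (a + b * m) else 0)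
      = if good b l m then φ (a + b * m) else 0 := by
    intro a ha
    have ha1 := (Finset.mem_Ico.1 ha)
    have : good b (l + 1) (a + b * m) ↔ good b l m := by
      unfold good
      rw [Nat.digits_add b (by omega) a m ha1.2 (Or.inl (by omega))]
      rw [List.length_cons, List.count_cons_of_ne (by omega)]
      simp
    simp only [this]
  rw [Finset.sum_congr rfl h1]
  split_ifs
  · rfl
  · simp

open Classical in
lemma Spow_eq {b : ℕ} (hb : 2 ≤ b) (h : ℝ → ℝ) (l : ℕ) : ∀ x : ℝ,
    ((S b) ^ l) h x = (∑ m ∈ Finset.range (b ^ l),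
      (if good b l m then h (((m : ℝ) + x) / b ^ l) else 0)) / b ^ l := by
  have hb0 : (0 : ℝ) < b := by exact_mod_cast (by omega : 0 < b)
  induction l with
  | zero =>
    intro x
    simp [good]
  | succ l ih =>
    intro x
    rw [pow_succ', Module.End.mul_apply, S_apply]
    simp only [ih]
    rw [good_sum hb l (fun m => h (((m : ℝ) + x) / b ^ (l + 1)))]
    rw [← Finset.sum_div, div_div, ← pow_succ, Finset.sum_comm]
    congr 1
    apply Finset.sum_congr rfl
    intro m _
    split_ifs
    · apply Finset.sum_congr rfl
      intro a _
      congr 1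
      push_cast
      field_simp
      ring
    · simp

open Classical in
lemma Spow_inv {b : ℕ} (hb : 2 ≤ b) (l : ℕ) :
    ((S b) ^ l) (fun x => 1 / x) 0 = ∑ m ∈ Finset.range (b ^ l),
      (if good b l m then 1 / (m : ℝ) else 0) := by
  have hb0 : (0 : ℝ) < b := by exact_mod_cast (by omega : 0 < b)
  rw [Spow_eq hb, Finset.sum_div]
  apply Finset.sum_congr rfl
  intro m _
  split_ifs
  · rw [add_zero]
    field_simp
  · simp

lemma digits_len_le {b : ℕ} (hb : 2 ≤ b) {m L : ℕ} :
    (Nat.digits b m).length ≤ L ↔ m < b ^ L := by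
  exact Nat.digits_length_le_iff (by omega) m

open Classical in
lemma partial_irwin {b : ℕ} (hb : 2 ≤ b) (L : ℕ) :
    ∑ m ∈ Finset.range (b ^ L),
      (if 0 < m ∧ (Nat.digits b m).count 0 = 0 then (1 : ℝ) / m else 0) =
    ∑ l ∈ Finset.range (L + 1), ((S b) ^ l) (fun x => 1 / x) 0 := by
  have h1 : ∀ l ∈ Finset.range (L + 1), ((S b) ^ l) (fun x => 1 / x) 0 =
      ∑ m ∈ Finset.range (b ^ L), (if good b l m then 1 / (m : ℝ) else 0) := by
    intro l hl
    rw [Spow_inv hb]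
    have hlL : l ≤ L := by have := Finset.mem_range.1 hl; omega
    apply Finset.sum_subset
    · exact Finset.range_mono (Nat.pow_le_pow_right (by omega) hlL)
    · intro m _ hm
      rw [if_neg]
      rintro ⟨h, _⟩
      exact hm (Finset.mem_range.2 ((digits_len_le hb).1 h.le))
  rw [Finset.sum_congr rfl h1, Finset.sum_comm]
  apply Finset.sum_congr rfl
  intro m hm
  have hlen := (digits_len_le hb).2 (Finset.mem_range.1 hm)
  rw [Finset.sum_eq_single (Nat.digits b m).length]
  · unfold good
    rcases Nat.eq_zero_or_pos m with rfl | h0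
    · simp
    · simp [h0]
  · intro l _ hl
    rw [if_neg]
    rintro ⟨h, _⟩
    exact hl h.symm
  · intro h
    exact absurd (Finset.mem_range.2 (by omega)) h

lemma S_inv {b : ℕ} (hb : 2 ≤ b) :
    S b (fun x => 1 / x) = fun x => ∑ a ∈ Finset.Ico 1 b, 1 / ((a : ℝ) + x) := by
  have hb0 : (0 : ℝ) < b := by exact_mod_cast (by omega : 0 < b)
  funext x
  rw [S_apply, Finset.sum_div]
  apply Finset.sum_congr rfl
  intro a _
  rw [one_div_div, div_right_comm, div_self hb0.ne']

lemma g_bdd (b : ℕ) : Bdd (fun x => ∑ a ∈ Finset.Ico 1 b, 1 / ((a : ℝ) + x)) := by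
  apply Bdd.of_cont
  apply continuousOn_finsetSum
  intro a ha
  have h1 : (1 : ℝ) ≤ a := by exact_mod_cast (Finset.mem_Ico.1 ha).1
  apply ContinuousOn.div (by fun_prop) (by fun_prop)
  intro x hx
  linarith [hx.1]

lemma irwin_eq {b : ℕ} (hb : 2 ≤ b) :
    irwinSum b 0 0 = M b (fun x => ∑ a ∈ Finset.Ico 1 b, 1 / ((a : ℝ) + x)) := by
  have hs : Summable fun l : ℕ => ((S b) ^ l) (S b (fun x => 1 / x)) 0 := by
    rw [S_inv hb]
    exact M_summable hb (g_bdd b)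
  have hs' : Summable fun l : ℕ => ((S b) ^ l) (fun x => 1 / x) 0 := by
    rw [← summable_nat_add_iff 1]
    refine hs.congr (fun l => ?_)
    rw [pow_succ, Module.End.mul_apply]
  have h1 := M_step hs
  rw [S_inv hb] at h1
  simp only [div_zero, zero_add] at h1
  rw [← h1]
  unfold irwinSum
  apply HasSum.tsum_eq
  have hnn : ∀ m : ℕ, 0 ≤ (if 0 < m ∧ (Nat.digits b m).count 0 = 0 then (1 : ℝ) / m else 0) := by
    intro m
    split_ifs
    · positivity
    · exact le_rfl
  rw [hasSum_iff_tendsto_nat_of_nonneg hnn]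
  have hmono : Monotone fun n : ℕ => ∑ m ∈ Finset.range n,
      (if 0 < m ∧ (Nat.digits b m).count 0 = 0 then (1 : ℝ) / m else 0) := by
    intro i j hij
    exact Finset.sum_le_sum_of_subset_of_nonneg (Finset.range_mono hij) (fun m _ _ => hnn m)
  rw [tendsto_iff_tendsto_subseq_of_monotone hmono
    (tendsto_pow_atTop_atTop_of_one_lt (by omega : 1 < b))]
  simp only [Function.comp_def, partial_irwin hb]
  exact hs'.hasSum.tendsto_sum_nat.comp (tendsto_add_atTop_nat 1)

lemma irwin_formula {b : ℕ} (hb : 2 ≤ b) :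
    irwinSum b 0 0 = b * Real.log b + (1 / b) * M b (fun x => p (x / b)) := by
  have hB := Bdd.of_cont p_cont
  have hT : Bdd (T b p) := by
    rw [T_eq hb]; exact (hB.S hb).add ((hB.div hb).smul _)
  rw [irwin_eq hb]
  have e : M b (fun x => ∑ a ∈ Finset.Ico 1 b, 1 / ((a : ℝ) + x)) =
      M b ((fun _ => Real.log b) - (p - T b p)) := by
    apply M_congr hb (g_bdd b)
    intro x hx
    have := gauss hb hx
    simp only [Pi.sub_apply]
    linarith
  rw [e, M_sub hb (Bdd_const _) (hB.sub hT), M_sub hb hB hT, M_T hb hB, M_const hb, p_zero]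
  ring

lemma main_formula {b : ℕ} (hb : 2 ≤ b) :
    irwinSum b 0 0 = b * Real.log b + b * Real.log (Real.Gamma (1 + 1 / b))
      + Real.eulerMascheroniConstant + (1 / b) * E b (fun x => p (x / b)) := by
  have hb0 : (0 : ℝ) < b := by exact_mod_cast (by omega : 0 < b)
  have hb1 : (1 : ℝ) ≤ b := by exact_mod_cast (by omega : 1 ≤ b)
  have h1 := int_p (y := 1 / b) (by positivity) (by rw [div_le_one hb0]; exact hb1)
  have h2 : (fun x : ℝ => p (x * (1 / b))) = fun x => p (x / b) := by
    funext x; rw [mul_one_div]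
  rw [h2] at h1
  unfold E
  rw [h1, irwin_formula hb]
  field_simp
  ring

lemma E_expand {b : ℕ} (hb : 2 ≤ b) : E b (fun x => p (x / b)) =
    zetaR 2 / b * (M b (fun x => x ^ 1) - b / 2) - zetaR 3 / b ^ 2 * (M b (fun x => x ^ 2) - b / 3)
     + zetaR 4 / b ^ 3 * (M b (fun x => x ^ 3) - b / 4) - E b (fun x => R (x / b)) := by
  have hb0 : (0 : ℝ) < b := by exact_mod_cast (by omega : 0 < b)
  have hR : ContinuousOn (fun x => R (x / b)) (Set.Icc (0 : ℝ) 1) := (R_lip hb).cont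
  have hRB := Bdd.of_cont hR
  have B1 := (Bdd_pow 1).smul (zetaR 2 / b)
  have B2 := (Bdd_pow 2).smul (zetaR 3 / b ^ 2)
  have B3 := (Bdd_pow 3).smul (zetaR 4 / b ^ 3)
  have hp : ∀ x ∈ Set.Icc (0 : ℝ) 1, p (x / b) = ((zetaR 2 / b) • (fun x : ℝ => x ^ 1)
      - (zetaR 3 / b ^ 2) • (fun x : ℝ => x ^ 2) + (zetaR 4 / b ^ 3) • (fun x : ℝ => x ^ 3)
      - fun x => R (x / b)) x := by
    intro x hx
    rw [p_eq (div_mem_unit hb hx)]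
    simp only [Pi.sub_apply, Pi.add_apply, Pi.smul_apply, smul_eq_mul]
    field_simp
  have hM := M_congr hb ((Bdd.of_cont p_cont).div hb) hp
  rw [M_sub hb ((B1.sub B2).add B3) hRB, M_add hb (B1.sub B2) B3, M_sub hb B1 B2,
    M_smul, M_smul, M_smul] at hM
  have hI : ∫ x in (0 : ℝ)..1, p (x / b) = zetaR 2 / b * (1 / 2) - zetaR 3 / b ^ 2 * (1 / 3)
      + zetaR 4 / b ^ 3 * (1 / 4) - ∫ x in (0 : ℝ)..1, R (x / b) := by
    rw [intervalIntegral.integral_congr (g := fun x => (zetaR 2 / b * x ^ 1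
      - zetaR 3 / b ^ 2 * x ^ 2 + zetaR 4 / b ^ 3 * x ^ 3) - R (x / b))]
    · rw [intervalIntegral.integral_sub, intervalIntegral.integral_add,
        intervalIntegral.integral_sub, intervalIntegral.integral_const_mul,
        intervalIntegral.integral_const_mul, intervalIntegral.integral_const_mul,
        integral_pow, integral_pow, integral_pow]
      · norm_num
      · exact Continuous.intervalIntegrable (by fun_prop) _ _
      · exact Continuous.intervalIntegrable (by fun_prop) _ _
      · exact Continuous.intervalIntegrable (by fun_prop) _ _
      · exact Continuous.intervalIntegrable (by fun_prop) _ _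
      · exact Continuous.intervalIntegrable (by fun_prop) _ _
      · apply ContinuousOn.intervalIntegrable
        rw [Set.uIcc_of_le zero_le_one]
        exact hR
    · intro x hx
      rw [Set.uIcc_of_le zero_le_one] at hx
      have := hp x hx
      simpa only [Pi.sub_apply, Pi.add_apply, Pi.smul_apply, smul_eq_mul] using this
  unfold E
  rw [hM, hI]
  ring

lemma delta_one {b : ℕ} (hb : 2 ≤ b) :
    M b (fun x => x ^ 1) - b / 2 = - (b / (2 * ((b : ℝ) ^ 2 - b + 1))) := by
  have hb0 : (2 : ℝ) ≤ b := by exact_mod_cast hb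
  have h := M_one_pow hb
  generalize M b (fun x => x ^ 1) = u at *
  have hd : (0 : ℝ) < (b : ℝ) ^ 2 - b + 1 := by nlinarith
  have e : (b / (2 * ((b : ℝ) ^ 2 - b + 1))) * ((b : ℝ) ^ 2 - b + 1) = b / 2 := by
    generalize (b : ℝ) ^ 2 - b + 1 = d at *
    field_simp
  apply mul_right_cancel₀ hd.ne'
  rw [neg_mul, e]
  linear_combination h

lemma delta_one_abs {b : ℕ} (hb : 2 ≤ b) :
    |M b (fun x => x ^ 1) - b / 2| ≤ 1 / b := by
  have hb0 : (2 : ℝ) ≤ b := by exact_mod_cast hb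
  rw [delta_one hb, abs_neg]
  have hd : (0 : ℝ) < (b : ℝ) ^ 2 - b + 1 := by nlinarith
  rw [abs_of_nonneg (by positivity), div_le_div_iff₀ (by positivity) (by positivity)]
  nlinarith

lemma delta_two {b : ℕ} (hb : 2 ≤ b) :
    |M b (fun x => x ^ 2) - b / 3 + 5 / (6 * (b : ℝ) ^ 2)| ≤ 4 / (b : ℝ) ^ 3 := by
  have hb0 : (2 : ℝ) ≤ b := by exact_mod_cast hb
  have h := M_two_pow hb
  have h1 := delta_one hb
  generalize M b (fun x => x ^ 1) = u at *
  generalize M b (fun x => x ^ 2) = v at *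
  generalize (b : ℝ) = c at *
  have hc : 0 < c := by linarith
  have hd : (0 : ℝ) < c ^ 2 - c + 1 := by nlinarith
  have hd3 : c ^ 3 / 2 ≤ c ^ 3 - c + 1 := by nlinarith [sq_nonneg c, mul_nonneg hc.le (sub_nonneg.2 hb0)]
  have hd3' : 0 < c ^ 3 - c + 1 := lt_of_lt_of_le (by positivity) hd3
  have hq : c / (2 * (c ^ 2 - c + 1)) ≤ 1 / c := by
    rw [div_le_div_iff₀ (by positivity) (by positivity)]
    nlinarith
  have hq0 : 0 ≤ c / (2 * (c ^ 2 - c + 1)) := by positivity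
  have hqe : c / (2 * (c ^ 2 - c + 1)) * (c ^ 2 - c + 1) = c / 2 := by
    generalize c ^ 2 - c + 1 = d at *
    field_simp
  generalize c / (2 * (c ^ 2 - c + 1)) = t at *
  have hs : 5 / (6 * c ^ 2) * c ^ 2 = 5 / 6 := by field_simp
  have hs0 : 0 ≤ 5 / (6 * c ^ 2) := by positivity
  generalize 5 / (6 * c ^ 2) = s at *
  have hu : u = c / 2 - t := by linarith
  have e : (v - c / 3 + s) * (c ^ 3 - c + 1) = t - s * (c - 1) := by
    subst hu
    linear_combination h - hqe + c * hs
  have hw : 1 / c * c = 1 := by field_simp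
  have hw0 : 0 < 1 / c := by positivity
  have hsc : s * (c - 1) ≤ 1 / c := by
    have : s * c ≤ 1 / c := by
      rw [le_div_iff₀ hc]; nlinarith
    nlinarith
  have hsc0 : 0 ≤ s * (c - 1) := mul_nonneg hs0 (by linarith)
  have e2 : |v - c / 3 + s| * (c ^ 3 - c + 1) ≤ 1 / c := by
    have ea : |v - c / 3 + s| * (c ^ 3 - c + 1) = |(v - c / 3 + s) * (c ^ 3 - c + 1)| := by
      rw [abs_mul, abs_of_pos hd3']
    rw [ea, e, abs_le]
    constructor <;> linarith
  have e3 : |v - c / 3 + s| * (c ^ 3 / 2) ≤ 1 := by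
    have := mul_le_mul_of_nonneg_left hd3 (abs_nonneg (v - c / 3 + s))
    have : 1 / c ≤ 1 := by rw [div_le_one hc]; linarith
    linarith
  rw [le_div_iff₀ (by positivity)]
  linarith

lemma delta_three {b : ℕ} (hb : 2 ≤ b) :
    |M b (fun x => x ^ 3) - b / 4| ≤ 10 / (b : ℝ) ^ 2 := by
  have hb0 : (2 : ℝ) ≤ b := by exact_mod_cast hb
  have h := M_three_pow hb
  have h1 := delta_one_abs hb
  have h2 := delta_two hb
  generalize M b (fun x => x ^ 1) = u at *
  generalize M b (fun x => x ^ 2) = v at *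
  generalize M b (fun x => x ^ 3) = w at *
  generalize (b : ℝ) = c at *
  have hc : 0 < c := by linarith
  have hd4 : c ^ 4 / 2 ≤ c ^ 4 - c + 1 := by
    have : 2 * 2 * 2 * c ≤ c * c * c * c := by gcongr
    nlinarith
  have hd4' : 0 < c ^ 4 - c + 1 := lt_of_lt_of_le (by positivity) hd4
  have hv : |v - c / 3| ≤ 2 := by
    have a1 : 4 / c ^ 3 ≤ 1 := by
      rw [div_le_one (by positivity)]
      have : 2 * 2 * 2 ≤ c * c * c := by gcongr
      nlinarith
    have a2 : 5 / (6 * c ^ 2) ≤ 1 := by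
      rw [div_le_one (by positivity)]; nlinarith
    have a3 : 0 ≤ 5 / (6 * c ^ 2) := by positivity
    rw [abs_le] at h2 ⊢
    constructor <;> linarith [h2.1, h2.2]
  have e : (w - c / 4) * (c ^ 4 - c + 1) = c * (c - 1) * (2 * c - 1) / 2 * (u - c / 2) +
      3 * (c * (c - 1) / 2) * (v - c / 3) - c / 4 := by
    linear_combination h
  have g0 : 0 ≤ c * (c - 1) * (2 * c - 1) / 2 := by
    have : 0 ≤ c - 1 := by linarith
    have : 0 ≤ 2 * c - 1 := by linarith
    positivity
  have g1 : 0 ≤ 3 * (c * (c - 1) / 2) := by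
    have : 0 ≤ c - 1 := by linarith
    positivity
  have t1 : |c * (c - 1) * (2 * c - 1) / 2 * (u - c / 2)| ≤ c ^ 2 := by
    rw [abs_mul, abs_of_nonneg g0]
    calc _ ≤ c * (c - 1) * (2 * c - 1) / 2 * (1 / c) := by gcongr
      _ = (c - 1) * (2 * c - 1) / 2 := by field_simp
      _ ≤ c ^ 2 := by nlinarith
  have t2 : |3 * (c * (c - 1) / 2) * (v - c / 3)| ≤ 3 * c ^ 2 := by
    rw [abs_mul, abs_of_nonneg g1]
    calc _ ≤ 3 * (c * (c - 1) / 2) * 2 := by gcongr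
      _ ≤ 3 * c ^ 2 := by nlinarith
  have e2 : |w - c / 4| * (c ^ 4 - c + 1) ≤ 5 * c ^ 2 := by
    have ea : |w - c / 4| * (c ^ 4 - c + 1) = |(w - c / 4) * (c ^ 4 - c + 1)| := by
      rw [abs_mul, abs_of_pos hd4']
    rw [ea, e]
    rw [abs_le] at *
    constructor <;> nlinarith [t1.1, t1.2, t2.1, t2.2]
  have e3 := mul_le_mul_of_nonneg_left hd4 (abs_nonneg (w - c / 4))
  rw [le_div_iff₀ (by positivity)]
  have e4 : (|w - c / 4| * c ^ 2) * c ^ 2 ≤ 10 * c ^ 2 := by nlinarith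
  exact le_of_mul_le_mul_right e4 (by positivity)

lemma final_bound {b : ℕ} (hb : 2 ≤ b) :
    |irwinSum b 0 0 -
      ((b : ℝ) * Real.log b + (b : ℝ) * Real.log (Real.Gamma (1 + 1 / (b : ℝ)))
        + Real.eulerMascheroniConstant
        - zetaR 2 / (2 * (b : ℝ) * ((b : ℝ) ^ 2 - b + 1))
        + 5 * zetaR 3 / (6 * (b : ℝ) ^ 5))| ≤
      (4 * zetaR 3 + 10 * zetaR 4 + 28 * zetaR 2) * ((b : ℝ) ^ 6)⁻¹ := by
  have hb0 : (2 : ℝ) ≤ b := by exact_mod_cast hb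
  have hc : (0 : ℝ) < b := by linarith
  have hd : (0 : ℝ) < (b : ℝ) ^ 2 - b + 1 := by nlinarith
  have hz2 := zeta_nonneg 2
  have hz3 := zeta_nonneg 3
  have hz4 := zeta_nonneg 4
  have h2 := delta_two hb
  have h3 := delta_three hb
  have hR := E_lip hb (by positivity) (R_lip hb)
  have h1 := delta_one hb
  rw [main_formula hb, E_expand hb, h1]
  generalize E b (fun x => R (x / b)) = ε at *
  generalize M b (fun x => x ^ 2) = v at *
  generalize M b (fun x => x ^ 3) = w at *
  generalize (b : ℝ) * Real.log b = A
  generalize (b : ℝ) * Real.log (Real.Gamma (1 + 1 / (b : ℝ))) = B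
  have e : A + B + Real.eulerMascheroniConstant +
        (1 / b) * (zetaR 2 / b * -(b / (2 * ((b : ℝ) ^ 2 - b + 1))) - zetaR 3 / b ^ 2 * (v - b / 3)
          + zetaR 4 / b ^ 3 * (w - b / 4) - ε) -
      (A + B + Real.eulerMascheroniConstant - zetaR 2 / (2 * (b : ℝ) * ((b : ℝ) ^ 2 - b + 1))
        + 5 * zetaR 3 / (6 * (b : ℝ) ^ 5)) =
      -(zetaR 3 / b ^ 3 * (v - b / 3 + 5 / (6 * (b : ℝ) ^ 2))) + zetaR 4 / b ^ 4 * (w - b / 4)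
        - (1 / b) * ε := by
    generalize (b : ℝ) ^ 2 - b + 1 = d at *
    generalize (v - (b : ℝ) / 3) = v' at *
    generalize (w - (b : ℝ) / 4) = w' at *
    field_simp
    ring
  rw [e]
  have t2 : |zetaR 3 / b ^ 3 * (v - b / 3 + 5 / (6 * (b : ℝ) ^ 2))| ≤
      4 * zetaR 3 * ((b : ℝ) ^ 6)⁻¹ := by
    rw [abs_mul, abs_of_nonneg (by positivity)]
    calc _ ≤ zetaR 3 / b ^ 3 * (4 / b ^ 3) := by gcongr
      _ = _ := by field_simp
  have t3 : |zetaR 4 / b ^ 4 * (w - b / 4)| ≤ 10 * zetaR 4 * ((b : ℝ) ^ 6)⁻¹ := by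
    rw [abs_mul, abs_of_nonneg (by positivity)]
    calc _ ≤ zetaR 4 / b ^ 4 * (10 / b ^ 2) := by gcongr
      _ = _ := by field_simp
  have t4 : |(1 / b) * ε| ≤ 28 * zetaR 2 * ((b : ℝ) ^ 6)⁻¹ := by
    rw [abs_mul, abs_of_nonneg (by positivity)]
    calc _ ≤ (1 / b) * (4 * (7 * zetaR 2 / b ^ 4) / b) := by gcongr
      _ = _ := by field_simp; ring
  rw [abs_le] at *
  constructor <;> linarith [t2.1, t2.2, t3.1, t3.2, t4.1, t4.2]

end Kempner

theorem kempner_zero_asymptotic_gamma :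
    (fun b : ℕ => irwinSum b 0 0 -
      ((b : ℝ) * Real.log b + (b : ℝ) * Real.log (Real.Gamma (1 + 1 / (b : ℝ)))
        + Real.eulerMascheroniConstant
        - zetaR 2 / (2 * (b : ℝ) * ((b : ℝ) ^ 2 - b + 1))
        + 5 * zetaR 3 / (6 * (b : ℝ) ^ 5)))
      =O[atTop] fun b : ℕ => ((b : ℝ) ^ 6)⁻¹ := by
  refine IsBigO.of_bound (4 * zetaR 3 + 10 * zetaR 4 + 28 * zetaR 2) ?_
  filter_upwards [eventually_ge_atTop 2] with b hb
  rw [Real.norm_eq_abs, Real.norm_of_nonneg (by positivity)]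
  exact Kempner.final_bound hb
end

section
/- For all integers b ≥ 2, as b → ∞, I(b,0,1) = b·log b + ζ(2)/(2b³) + ζ(2)/(2b⁴) − (3ζ(2) + 5ζ(3))/(6b⁵) − (3ζ(2) − ζ(4))/(2b⁶) + O(b⁻⁷). -/
open Filter Asymptotics

noncomputable def K0 (b : ℕ) : ℕ → (ℝ → ℝ) → ℝ
  | 0, f => f 0
  | l + 1, f => (1 / (b : ℝ)) * ∑ a ∈ Finset.Ico 1 b, K0 b l (fun x => f (((a : ℝ) + x) / b))

noncomputable def K1 (b : ℕ) : ℕ → (ℝ → ℝ) → ℝ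
  | 0, _ => 0
  | l + 1, f => (1 / (b : ℝ)) * ∑ a ∈ Finset.Ico 1 b, K1 b l (fun x => f (((a : ℝ) + x) / b))
      + (1 / (b : ℝ)) * K0 b l (fun x => f (x / b))

lemma K0_add (b l : ℕ) : ∀ f g : ℝ → ℝ, K0 b l (fun x => f x + g x) = K0 b l f + K0 b l g := by
  induction l with
  | zero => intro f g; simp [K0]
  | succ l ih =>
    intro f g
    simp only [K0]
    rw [← mul_add, ← Finset.sum_add_distrib]
    congr 1
    apply Finset.sum_congr rfl
    intro a _
    exact ih (fun x => f ((a + x) / b)) (fun x => g ((a + x) / b))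

lemma K0_smul (b l : ℕ) (c : ℝ) : ∀ f : ℝ → ℝ, K0 b l (fun x => c * f x) = c * K0 b l f := by
  induction l with
  | zero => intro f; simp [K0]
  | succ l ih =>
    intro f
    simp only [K0]
    have h1 : ∀ a : ℕ, K0 b l (fun x => c * f (((a : ℝ) + x) / b)) =
      c * K0 b l (fun x => f (((a : ℝ) + x) / b)) :=
      fun a => ih (fun x => f ((a + x) / b))
    simp only [h1, ← Finset.mul_sum]
    ring

lemma K1_add (b l : ℕ) : ∀ f g : ℝ → ℝ, K1 b l (fun x => f x + g x) = K1 b l f + K1 b l g := by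
  induction l with
  | zero => intro f g; simp [K1]
  | succ l ih =>
    intro f g
    simp only [K1]
    have h1 : ∀ a : ℕ, K1 b l (fun x => f (((a : ℝ) + x) / b) + g (((a : ℝ) + x) / b)) =
      K1 b l (fun x => f (((a : ℝ) + x) / b)) + K1 b l (fun x => g (((a : ℝ) + x) / b)) :=
      fun a => ih (fun x => f ((a + x) / b)) (fun x => g ((a + x) / b))
    simp only [h1, K0_add b l (fun x => f (x / b)) (fun x => g (x / b)), Finset.sum_add_distrib]
    ring

lemma K1_smul (b l : ℕ) (c : ℝ) : ∀ f : ℝ → ℝ, K1 b l (fun x => c * f x) = c * K1 b l f := by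
  induction l with
  | zero => intro f; simp [K1]
  | succ l ih =>
    intro f
    simp only [K1]
    have h1 : ∀ a : ℕ, K1 b l (fun x => c * f (((a : ℝ) + x) / b)) =
      c * K1 b l (fun x => f (((a : ℝ) + x) / b)) :=
      fun a => ih (fun x => f ((a + x) / b))
    simp only [h1, K0_smul b l c (fun x => f (x / b)), ← Finset.mul_sum]
    ring

lemma K0_sum (b l : ℕ) {ι : Type*} (s : Finset ι) (f : ι → ℝ → ℝ) :
    K0 b l (fun x => ∑ i ∈ s, f i x) = ∑ i ∈ s, K0 b l (f i) := by
  classical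
  induction s using Finset.induction_on with
  | empty => simpa using K0_smul b l 0 (fun _ => 0)
  | insert i s hi ih =>
    simp only [Finset.sum_insert hi]
    rw [K0_add b l (f i) (fun x => ∑ i ∈ s, f i x), ih]

lemma K1_sum (b l : ℕ) {ι : Type*} (s : Finset ι) (f : ι → ℝ → ℝ) :
    K1 b l (fun x => ∑ i ∈ s, f i x) = ∑ i ∈ s, K1 b l (f i) := by
  classical
  induction s using Finset.induction_on with
  | empty => simpa using K1_smul b l 0 (fun _ => 0)
  | insert i s hi ih =>
    simp only [Finset.sum_insert hi]
    rw [K1_add b l (f i) (fun x => ∑ i ∈ s, f i x), ih]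

lemma map_mem_unit {b a : ℕ} (hb : 2 ≤ b) (ha : a < b) {x : ℝ} (hx : x ∈ Set.Icc (0:ℝ) 1) :
    ((a : ℝ) + x) / b ∈ Set.Icc (0:ℝ) 1 := by
  have hb0 : (0:ℝ) < b := by positivity
  have h : (a : ℝ) + 1 ≤ b := by exact_mod_cast ha
  have ha0 : (0:ℝ) ≤ a := by positivity
  refine ⟨div_nonneg (by linarith [hx.1]) hb0.le, ?_⟩
  rw [div_le_one hb0]; linarith [hx.2]

lemma K0_mono {b : ℕ} (hb : 2 ≤ b) (l : ℕ) : ∀ f g : ℝ → ℝ,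
    (∀ x ∈ Set.Icc (0:ℝ) 1, f x ≤ g x) → K0 b l f ≤ K0 b l g := by
  induction l with
  | zero => intro f g h; exact h 0 (by simp)
  | succ l ih =>
    intro f g h
    simp only [K0]
    gcongr with a ha
    apply ih
    intro x hx
    exact h _ (map_mem_unit hb (Finset.mem_Ico.1 ha).2 hx)

lemma K1_mono {b : ℕ} (hb : 2 ≤ b) (l : ℕ) : ∀ f g : ℝ → ℝ,
    (∀ x ∈ Set.Icc (0:ℝ) 1, f x ≤ g x) → K1 b l f ≤ K1 b l g := by
  induction l with
  | zero => intro f g h; exact le_refl _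
  | succ l ih =>
    intro f g h
    simp only [K1]
    have h1 : ∀ a ∈ Finset.Ico 1 b, K1 b l (fun x => f (((a : ℝ) + x) / b)) ≤
        K1 b l (fun x => g (((a : ℝ) + x) / b)) := by
      intro a ha
      apply ih
      intro x hx
      exact h _ (map_mem_unit hb (Finset.mem_Ico.1 ha).2 hx)
    have h2 : K0 b l (fun x => f (x / b)) ≤ K0 b l (fun x => g (x / b)) := by
      apply K0_mono hb
      intro x hx
      apply h
      simpa using map_mem_unit hb (by omega : 0 < b) hx
    gcongr with a ha
    exact h1 a ha

lemma K0_congr {b : ℕ} (hb : 2 ≤ b) (l : ℕ) (f g : ℝ → ℝ)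
    (h : ∀ x ∈ Set.Icc (0:ℝ) 1, f x = g x) : K0 b l f = K0 b l g :=
  le_antisymm (K0_mono hb l f g fun x hx => (h x hx).le)
    (K0_mono hb l g f fun x hx => (h x hx).ge)

lemma K1_congr {b : ℕ} (hb : 2 ≤ b) (l : ℕ) (f g : ℝ → ℝ)
    (h : ∀ x ∈ Set.Icc (0:ℝ) 1, f x = g x) : K1 b l f = K1 b l g :=
  le_antisymm (K1_mono hb l f g fun x hx => (h x hx).le)
    (K1_mono hb l g f fun x hx => (h x hx).ge)

lemma K0_one {b : ℕ} (hb : 2 ≤ b) (l : ℕ) :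
    K0 b l (fun _ => 1) = (((b : ℝ) - 1) / b) ^ l := by
  induction l with
  | zero => simp [K0]
  | succ l ih =>
    simp only [K0, ih, Finset.sum_const, Nat.card_Ico, nsmul_eq_mul]
    rw [Nat.cast_sub (by omega)]
    push_cast
    ring

lemma K1_one {b : ℕ} (hb : 2 ≤ b) (l : ℕ) :
    K1 b l (fun _ => 1) = l * (((b : ℝ) - 1) / b) ^ l / (b - 1) := by
  have hb0 : (b : ℝ) - 1 ≠ 0 := by
    have : (2:ℝ) ≤ b := by exact_mod_cast hb
    intro h; linarith
  induction l with
  | zero => simp [K1]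
  | succ l ih =>
    simp only [K1, ih, Finset.sum_const, Nat.card_Ico, nsmul_eq_mul, K0_one hb]
    rw [Nat.cast_sub (by omega)]
    push_cast
    field_simp
    rw [pow_succ]
    field_simp

lemma K0_hasSum_one {b : ℕ} (hb : 2 ≤ b) : HasSum (fun l => K0 b l (fun _ => 1)) (b : ℝ) := by
  have hb2 : (2:ℝ) ≤ b := by exact_mod_cast hb
  simp only [K0_one hb]
  have := hasSum_geometric_of_lt_one (r := ((b:ℝ) - 1) / b) (div_nonneg (by linarith) (by linarith))
    (by rw [div_lt_one (by linarith)]; linarith)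
  convert this using 1
  field_simp
  ring

lemma K1_hasSum_one {b : ℕ} (hb : 2 ≤ b) : HasSum (fun l => K1 b l (fun _ => 1)) (b : ℝ) := by
  have hb2 : (2:ℝ) ≤ b := by exact_mod_cast hb
  have hb0 : (b : ℝ) - 1 ≠ 0 := by
    intro h; linarith
  simp only [K1_one hb]
  have h0 : 0 ≤ ((b:ℝ) - 1) / b := div_nonneg (by linarith) (by linarith)
  have := hasSum_coe_mul_geometric_of_norm_lt_one (r := ((b:ℝ) - 1) / b) 
    (by rw [Real.norm_of_nonneg h0, div_lt_one (by linarith)]; linarith)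
  have h2 : 1 - ((b:ℝ) - 1) / b = 1 / b := by field_simp; ring
  have h3 : (b:ℝ) = ((b:ℝ) - 1) / b / (1 - ((b:ℝ) - 1) / b) ^ 2 / ((b:ℝ) - 1) := by
    rw [h2]
    field_simp
  have h4 := this.div_const ((b:ℝ) - 1)
  rwa [← h3] at h4

lemma K0_abs_le {b : ℕ} (hb : 2 ≤ b) (l : ℕ) (f : ℝ → ℝ) (C : ℝ)
    (h : ∀ x ∈ Set.Icc (0:ℝ) 1, |f x| ≤ C) : |K0 b l f| ≤ C * K0 b l (fun _ => 1) := by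
  rw [abs_le, ← neg_mul, ← K0_smul, ← K0_smul]
  constructor
  · apply K0_mono hb; intro x hx; have := (abs_le.1 (h x hx)).1; linarith
  · apply K0_mono hb; intro x hx; have := (abs_le.1 (h x hx)).2; linarith

lemma K1_abs_le {b : ℕ} (hb : 2 ≤ b) (l : ℕ) (f : ℝ → ℝ) (C : ℝ)
    (h : ∀ x ∈ Set.Icc (0:ℝ) 1, |f x| ≤ C) : |K1 b l f| ≤ C * K1 b l (fun _ => 1) := by
  rw [abs_le, ← neg_mul, ← K1_smul, ← K1_smul]
  constructor
  · apply K1_mono hb; intro x hx; have := (abs_le.1 (h x hx)).1; linarith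
  · apply K1_mono hb; intro x hx; have := (abs_le.1 (h x hx)).2; linarith

/-- bounded on the unit interval -/
def UB (f : ℝ → ℝ) : Prop := ∃ C, ∀ x ∈ Set.Icc (0:ℝ) 1, |f x| ≤ C

lemma K0_summable {b : ℕ} (hb : 2 ≤ b) {f : ℝ → ℝ} (h : UB f) :
    Summable (fun l => K0 b l f) := by
  obtain ⟨C, hC⟩ := h
  exact Summable.of_norm_bounded ((K0_hasSum_one hb).summable.mul_left C)
    fun l => K0_abs_le hb l f C hC

lemma K1_summable {b : ℕ} (hb : 2 ≤ b) {f : ℝ → ℝ} (h : UB f) :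
    Summable (fun l => K1 b l f) := by
  obtain ⟨C, hC⟩ := h
  exact Summable.of_norm_bounded ((K1_hasSum_one hb).summable.mul_left C)
    fun l => K1_abs_le hb l f C hC

noncomputable def J0 (b : ℕ) (f : ℝ → ℝ) : ℝ := ∑' l, K0 b l f
noncomputable def J1 (b : ℕ) (f : ℝ → ℝ) : ℝ := ∑' l, K1 b l f

lemma J0_abs_le {b : ℕ} (hb : 2 ≤ b) (f : ℝ → ℝ) (C : ℝ)
    (h : ∀ x ∈ Set.Icc (0:ℝ) 1, |f x| ≤ C) : |J0 b f| ≤ C * b := by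
  rw [J0, ← Real.norm_eq_abs]
  exact tsum_of_norm_bounded ((K0_hasSum_one hb).mul_left C) fun l => K0_abs_le hb l f C h

lemma J1_abs_le {b : ℕ} (hb : 2 ≤ b) (f : ℝ → ℝ) (C : ℝ)
    (h : ∀ x ∈ Set.Icc (0:ℝ) 1, |f x| ≤ C) : |J1 b f| ≤ C * b := by
  rw [J1, ← Real.norm_eq_abs]
  exact tsum_of_norm_bounded ((K1_hasSum_one hb).mul_left C) fun l => K1_abs_le hb l f C h

lemma J0_one {b : ℕ} (hb : 2 ≤ b) : J0 b (fun _ => 1) = b := (K0_hasSum_one hb).tsum_eq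
lemma J1_one {b : ℕ} (hb : 2 ≤ b) : J1 b (fun _ => 1) = b := (K1_hasSum_one hb).tsum_eq

lemma J0_add {b : ℕ} (hb : 2 ≤ b) {f g : ℝ → ℝ} (hf : UB f) (hg : UB g) :
    J0 b (fun x => f x + g x) = J0 b f + J0 b g := by
  simp only [J0, K0_add]
  exact (K0_summable hb hf).tsum_add (K0_summable hb hg)

lemma J1_add {b : ℕ} (hb : 2 ≤ b) {f g : ℝ → ℝ} (hf : UB f) (hg : UB g) :
    J1 b (fun x => f x + g x) = J1 b f + J1 b g := by
  simp only [J1, K1_add]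
  exact (K1_summable hb hf).tsum_add (K1_summable hb hg)

lemma J0_smul (b : ℕ) (c : ℝ) (f : ℝ → ℝ) : J0 b (fun x => c * f x) = c * J0 b f := by
  simp only [J0, K0_smul, tsum_mul_left]

lemma J1_smul (b : ℕ) (c : ℝ) (f : ℝ → ℝ) : J1 b (fun x => c * f x) = c * J1 b f := by
  simp only [J1, K1_smul, tsum_mul_left]

lemma J0_sum {b : ℕ} (hb : 2 ≤ b) {ι : Type*} (s : Finset ι) (f : ι → ℝ → ℝ)
    (h : ∀ i ∈ s, UB (f i)) : J0 b (fun x => ∑ i ∈ s, f i x) = ∑ i ∈ s, J0 b (f i) := by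
  simp only [J0, K0_sum]
  exact Summable.tsum_finsetSum fun i hi => K0_summable hb (h i hi)

lemma J1_sum {b : ℕ} (hb : 2 ≤ b) {ι : Type*} (s : Finset ι) (f : ι → ℝ → ℝ)
    (h : ∀ i ∈ s, UB (f i)) : J1 b (fun x => ∑ i ∈ s, f i x) = ∑ i ∈ s, J1 b (f i) := by
  simp only [J1, K1_sum]
  exact Summable.tsum_finsetSum fun i hi => K1_summable hb (h i hi)

lemma J0_congr {b : ℕ} (hb : 2 ≤ b) (f g : ℝ → ℝ)
    (h : ∀ x ∈ Set.Icc (0:ℝ) 1, f x = g x) : J0 b f = J0 b g :=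
  tsum_congr fun l => K0_congr hb l f g h

lemma J1_congr {b : ℕ} (hb : 2 ≤ b) (f g : ℝ → ℝ)
    (h : ∀ x ∈ Set.Icc (0:ℝ) 1, f x = g x) : J1 b f = J1 b g :=
  tsum_congr fun l => K1_congr hb l f g h

lemma UB.comp {b a : ℕ} (hb : 2 ≤ b) (ha : a < b) {f : ℝ → ℝ} (h : UB f) :
    UB (fun x => f (((a : ℝ) + x) / b)) := by
  obtain ⟨C, hC⟩ := h
  exact ⟨C, fun x hx => hC _ (map_mem_unit hb ha hx)⟩

lemma UB.comp0 {b : ℕ} (hb : 2 ≤ b) {f : ℝ → ℝ} (h : UB f) :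
    UB (fun x => f (x / b)) := by
  simpa using h.comp hb (by omega : 0 < b)

lemma UB.pow (m : ℕ) : UB (fun x => x ^ m) :=
  ⟨1, fun x hx => by rw [abs_pow, abs_of_nonneg hx.1]; exact pow_le_one₀ hx.1 hx.2⟩

lemma UB.smul (c : ℝ) {f : ℝ → ℝ} (h : UB f) : UB (fun x => c * f x) := by
  obtain ⟨C, hC⟩ := h
  exact ⟨|c| * C, fun x hx => by rw [abs_mul]; gcongr; exact hC x hx⟩

lemma UB.add {f g : ℝ → ℝ} (h : UB f) (h' : UB g) : UB (fun x => f x + g x) := by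
  obtain ⟨C, hC⟩ := h
  obtain ⟨C', hC'⟩ := h'
  exact ⟨C + C', fun x hx => (abs_add_le _ _).trans (add_le_add (hC x hx) (hC' x hx))⟩

lemma UB.sum {ι : Type*} (s : Finset ι) (f : ι → ℝ → ℝ)
    (h : ∀ i ∈ s, UB (f i)) : UB (fun x => ∑ i ∈ s, f i x) := by
  classical
  induction s using Finset.induction_on with
  | empty => exact ⟨0, by simp⟩
  | insert i s hi ih =>
    simp only [Finset.sum_insert hi]
    exact (h i (by simp)).add (ih fun j hj => h j (by simp [hj]))

lemma J0_rec {b : ℕ} (hb : 2 ≤ b) {f : ℝ → ℝ} (h : UB f) :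
    J0 b f = f 0 + (1 / (b : ℝ)) * ∑ a ∈ Finset.Ico 1 b, J0 b (fun x => f (((a : ℝ) + x) / b)) := by
  rw [J0, (K0_summable hb h).tsum_eq_zero_add]
  simp only [K0]
  rw [tsum_mul_left, Summable.tsum_finsetSum]
  · rfl
  · intro a ha
    exact K0_summable hb (h.comp hb (Finset.mem_Ico.1 ha).2)

lemma J1_rec {b : ℕ} (hb : 2 ≤ b) {f : ℝ → ℝ} (h : UB f) :
    J1 b f = (1 / (b : ℝ)) * ∑ a ∈ Finset.Ico 1 b, J1 b (fun x => f (((a : ℝ) + x) / b))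
      + (1 / (b : ℝ)) * J0 b (fun x => f (x / b)) := by
  have hs : ∀ a ∈ Finset.Ico 1 b, Summable (fun l => K1 b l (fun x => f (((a : ℝ) + x) / b))) := by
    intro a ha
    exact K1_summable hb (h.comp hb (Finset.mem_Ico.1 ha).2)
  rw [J1, (K1_summable hb h).tsum_eq_zero_add]
  simp only [K1]
  rw [Summable.tsum_add, tsum_mul_left, Summable.tsum_finsetSum hs, tsum_mul_left, zero_add]
  · rfl
  · exact (summable_sum hs).mul_left _
  · exact (K0_summable hb (h.comp0 hb)).mul_left _

noncomputable def tm (b m : ℕ) : ℝ :=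
  if 0 < m ∧ (Nat.digits b m).count 0 = 1 then (1 : ℝ) / m else 0

noncomputable def blk (b l A : ℕ) : ℝ := ∑ m ∈ Finset.Ico (A * b ^ l) ((A + 1) * b ^ l), tm b m

lemma blk_sum (b l B n : ℕ) : ∑ r ∈ Finset.range n, blk b l (B + r) =
    ∑ m ∈ Finset.Ico (B * b ^ l) ((B + n) * b ^ l), tm b m := by
  induction n with
  | zero => simp
  | succ n ih =>
    rw [Finset.sum_range_succ, ih, blk, ← add_assoc B n 1]
    exact Finset.sum_Ico_consecutive _ (Nat.mul_le_mul_right _ (by omega))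
      (Nat.mul_le_mul_right _ (by omega))

lemma blk_succ {b : ℕ} (hb : 2 ≤ b) (l A : ℕ) :
    blk b (l + 1) A = blk b l (A * b) + ∑ r ∈ Finset.Ico 1 b, blk b l (A * b + r) := by
  have h := blk_sum b l (A * b) b
  rw [Finset.range_eq_Ico, Finset.sum_eq_sum_Ico_succ_bot (by omega)] at h
  rw [blk, pow_succ']
  rw [add_zero] at h
  rw [show (0 + 1 : ℕ) = 1 from rfl] at h
  rw [h]
  congr 2 <;> ring

lemma count_step {b : ℕ} (hb : 2 ≤ b) {A r : ℕ} (hA : 0 < A) (hr : r < b) :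
    (Nat.digits b (A * b + r)).count 0 = (Nat.digits b A).count 0 + if r = 0 then 1 else 0 := by
  rw [show A * b + r = r + b * A by ring, Nat.digits_add b (by omega) r A hr (Or.inr (by omega)),
    List.count_cons]
  simp

lemma blk_two {b : ℕ} (hb : 2 ≤ b) (l : ℕ) : ∀ A, 0 < A → 2 ≤ (Nat.digits b A).count 0 →
    blk b l A = 0 := by
  induction l with
  | zero =>
    intro A hA h
    simp [blk, tm]
    omega
  | succ l ih =>
    intro A hA h
    have hAb : 0 < A * b := by positivity
    have h0 := count_step hb (A := A) (r := 0) hA (by omega)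
    rw [add_zero] at h0
    rw [blk_succ hb, ih (A * b) hAb (by rw [h0]; omega), zero_add]
    apply Finset.sum_eq_zero
    intro r hr
    apply ih _ (by omega)
    rw [count_step hb hA (Finset.mem_Ico.1 hr).2]
    omega

lemma scale_eq {b : ℕ} (hb : 2 ≤ b) (A r : ℕ) : (fun x : ℝ => 1 / (((A * b + r : ℕ) : ℝ) + x)) =
    fun x => (1 / (b : ℝ)) * (1 / ((A : ℝ) + ((r : ℝ) + x) / b)) := by
  funext x
  have : (b : ℝ) ≠ 0 := by positivity
  rw [div_mul_div_comm, one_mul]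
  congr 1
  push_cast
  field_simp
  ring

lemma blk_one {b : ℕ} (hb : 2 ≤ b) (l : ℕ) : ∀ A, 0 < A → (Nat.digits b A).count 0 = 1 →
    blk b l A = K0 b l (fun x => 1 / ((A : ℝ) + x)) := by
  induction l with
  | zero =>
    intro A hA h
    simp [blk, tm, K0, h, hA]
  | succ l ih =>
    intro A hA h
    have hAb : 0 < A * b := by positivity
    have h0 := count_step hb (A := A) (r := 0) hA (by omega)
    rw [add_zero] at h0
    rw [blk_succ hb, blk_two hb l (A * b) hAb (by rw [h0, h]; simp), zero_add, K0, Finset.mul_sum]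
    apply Finset.sum_congr rfl
    intro r hr
    have hr' := Finset.mem_Ico.1 hr
    rw [ih _ (by omega), scale_eq hb, K0_smul]
    rw [count_step hb hA hr'.2, h, if_neg (by omega)]

lemma blk_zero {b : ℕ} (hb : 2 ≤ b) (l : ℕ) : ∀ A, 0 < A → (Nat.digits b A).count 0 = 0 →
    blk b l A = K1 b l (fun x => 1 / ((A : ℝ) + x)) := by
  induction l with
  | zero =>
    intro A hA h
    have h' : ¬ (Nat.digits b A).count 0 = 1 := by omega
    simp only [blk, tm, K1, pow_zero, mul_one, Nat.Ico_succ_singleton, Finset.sum_singleton, h']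
    simp
  | succ l ih =>
    intro A hA h
    have hAb : 0 < A * b := by positivity
    have h0 := count_step hb (A := A) (r := 0) hA (by omega)
    rw [add_zero] at h0
    rw [blk_succ hb, blk_one hb l (A * b) hAb (by rw [h0, h]; simp), K1, add_comm, Finset.mul_sum]
    congr 1
    · apply Finset.sum_congr rfl
      intro r hr
      have hr' := Finset.mem_Ico.1 hr
      rw [ih _ (by omega), scale_eq hb, K1_smul]
      rw [count_step hb hA hr'.2, h, if_neg (by omega)]
    · have := scale_eq hb A 0
      rw [add_zero] at this
      rw [this, K0_smul]
      have e : (fun x : ℝ => 1 / ((A : ℝ) + (((0 : ℕ) : ℝ) + x) / b)) =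
          fun x : ℝ => 1 / ((A : ℝ) + x / b) := by
        funext x
        rw [Nat.cast_zero, zero_add]
      rw [e]

lemma partial_sum {b : ℕ} (hb : 2 ≤ b) (N : ℕ) : ∑ m ∈ Finset.range (b ^ N), tm b m =
    ∑ l ∈ Finset.range N, K1 b l (fun x => ∑ a ∈ Finset.Ico 1 b, 1 / ((a : ℝ) + x)) := by
  induction N with
  | zero => simp [tm]
  | succ N ih =>
    rw [Finset.sum_range_succ, ← ih, K1_sum]
    have h : ∀ a ∈ Finset.Ico 1 b, K1 b N (fun x => 1 / ((a : ℝ) + x)) = blk b N a := by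
      intro a ha
      have ha' := Finset.mem_Ico.1 ha
      rw [blk_zero hb N a (by omega)]
      rw [Nat.digits_of_lt b a (by omega) ha'.2]
      rw [List.count_eq_zero, List.mem_singleton]
      omega
    rw [Finset.sum_congr rfl h, Finset.sum_Ico_eq_sum_range, blk_sum]
    have e : (1 + (b - 1)) * b ^ N = b ^ (N + 1) := by
      rw [Nat.add_sub_cancel' (by omega), pow_succ']
    rw [e, one_mul, Finset.range_eq_Ico, Finset.range_eq_Ico]
    exact (Finset.sum_Ico_consecutive _ (Nat.zero_le _) (Nat.pow_le_pow_right (by omega) (by omega))).symm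

lemma UB_inv (a : ℕ) (ha : 1 ≤ a) : UB (fun x => 1 / ((a : ℝ) + x)) := by
  refine ⟨1, fun x hx => ?_⟩
  have h1 : (1:ℝ) ≤ a := by exact_mod_cast ha
  have h2 : (1:ℝ) ≤ a + x := by linarith [hx.1]
  rw [abs_of_nonneg (by positivity), div_le_one (by linarith)]
  exact h2

lemma irwin_eq {b : ℕ} (hb : 2 ≤ b) :
    irwinSum b 0 1 = J1 b (fun x => ∑ a ∈ Finset.Ico 1 b, 1 / ((a : ℝ) + x)) := by
  have hub : UB (fun x => ∑ a ∈ Finset.Ico 1 b, 1 / ((a : ℝ) + x)) :=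
    UB.sum _ (fun (a : ℕ) x => 1 / ((a : ℝ) + x)) fun a ha => UB_inv a (Finset.mem_Ico.1 ha).1
  have hnn : ∀ m, 0 ≤ tm b m := by
    intro m; unfold tm; split_ifs <;> positivity
  have h := (K1_summable hb hub).hasSum.tendsto_sum_nat
  have h2 : HasSum (tm b) (J1 b (fun x => ∑ a ∈ Finset.Ico 1 b, 1 / ((a : ℝ) + x))) := by
    rw [hasSum_iff_tendsto_nat_of_nonneg hnn]
    rw [tendsto_iff_tendsto_subseq_of_monotone (φ := fun N => b ^ N)]
    · refine h.congr fun N => ?_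
      exact (partial_sum hb N).symm
    · intro i j hij
      exact Finset.sum_le_sum_of_subset_of_nonneg (Finset.range_mono hij) fun _ _ _ => hnn _
    · exact tendsto_pow_atTop_atTop_of_one_lt (by omega)
  exact h2.tsum_eq

noncomputable def FF (y : ℝ) : ℝ := ∑' n : ℕ, (1 / (((n : ℝ) + 1) + y) - 1 / ((n : ℝ) + 1))

lemma zeta_hasSum {s : ℕ} (hs : 2 ≤ s) :
    HasSum (fun n : ℕ => 1 / ((n : ℝ) + 1) ^ s) (zetaR s) := by
  have h := (summable_nat_add_iff 1).2 (Real.summable_one_div_nat_pow.2 (by omega : 1 < s))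
  push_cast at h
  exact h.hasSum

lemma FF_term_bound (n : ℕ) {y : ℝ} (hy : y ∈ Set.Icc (0:ℝ) 1) :
    ‖1 / (((n : ℝ) + 1) + y) - 1 / ((n : ℝ) + 1)‖ ≤ 1 / ((n : ℝ) + 1) ^ 2 := by
  have h0 := hy.1
  have h1 := hy.2
  have e : 1 / (((n : ℝ) + 1) + y) - 1 / ((n : ℝ) + 1) =
      -(y / ((((n : ℝ) + 1) + y) * ((n : ℝ) + 1))) := by
    field_simp
    ring
  rw [e, norm_neg, Real.norm_of_nonneg (by positivity)]
  apply div_le_div₀ zero_le_one h1 (by positivity)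
  nlinarith

lemma FF_hasSum {y : ℝ} (hy : y ∈ Set.Icc (0:ℝ) 1) :
    HasSum (fun n : ℕ => 1 / (((n : ℝ) + 1) + y) - 1 / ((n : ℝ) + 1)) (FF y) :=
  (Summable.of_norm_bounded (zeta_hasSum (le_refl 2)).summable fun n => FF_term_bound n hy).hasSum

lemma FF_UB : UB FF := by
  refine ⟨zetaR 2, fun y hy => ?_⟩
  rw [FF, ← Real.norm_eq_abs]
  exact tsum_of_norm_bounded (zeta_hasSum (le_refl 2)) fun n => FF_term_bound n hy

lemma FF_expand {y : ℝ} (hy : y ∈ Set.Icc (0:ℝ) 1) :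
    |FF y - (-zetaR 2 * y + zetaR 3 * y ^ 2 - zetaR 4 * y ^ 3 + zetaR 5 * y ^ 4 - zetaR 6 * y ^ 5
      + zetaR 7 * y ^ 6)| ≤ zetaR 8 * y ^ 7 := by
  have h0 := hy.1
  have h := (FF_hasSum hy).sub ((((((((zeta_hasSum (le_refl 2)).neg.mul_right y).add
    ((zeta_hasSum (s := 3) (by norm_num)).mul_right (y ^ 2))).sub
    ((zeta_hasSum (s := 4) (by norm_num)).mul_right (y ^ 3))).add
    ((zeta_hasSum (s := 5) (by norm_num)).mul_right (y ^ 4))).sub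
    ((zeta_hasSum (s := 6) (by norm_num)).mul_right (y ^ 5))).add
    ((zeta_hasSum (s := 7) (by norm_num)).mul_right (y ^ 6))))
  rw [← h.tsum_eq, ← Real.norm_eq_abs]
  refine tsum_of_norm_bounded ((zeta_hasSum (s := 8) (by norm_num)).mul_right (y ^ 7)) fun n => ?_
  set c : ℝ := (n : ℝ) + 1 with hc
  have hc0 : 0 < c := by positivity
  have e : 1 / (c + y) - 1 / c - (-(1 / c ^ 2) * y + 1 / c ^ 3 * y ^ 2 - 1 / c ^ 4 * y ^ 3
     + 1 / c ^ 5 * y ^ 4 - 1 / c ^ 6 * y ^ 5 + 1 / c ^ 7 * y ^ 6) =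
     -(1 / (c ^ 7 * (c + y)) * y ^ 7) := by
    have : c + y ≠ 0 := by positivity
    field_simp
    ring
  rw [e, norm_neg, Real.norm_of_nonneg (by positivity)]
  gcongr
  rw [pow_succ c 7]
  gcongr
  linarith

lemma FF_finite {b : ℕ} (hb : 2 ≤ b) (x : ℝ) (N : ℕ) :
    ∑ n ∈ Finset.range (b - 1 + b * N), 1 / (((n : ℝ) + 1) + x) =
      ∑ n ∈ Finset.range (b - 1), 1 / (((n : ℝ) + 1) + x) +
      (1 / (b : ℝ)) * ∑ r ∈ Finset.range b, ∑ c ∈ Finset.range N,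
        1 / (((c : ℝ) + 1) + ((r : ℝ) + x) / b) := by
  have hb0 : (b : ℝ) ≠ 0 := by positivity
  induction N with
  | zero => simp
  | succ N ih =>
    rw [Nat.mul_succ, ← add_assoc, Finset.sum_range_add, ih]
    simp only [Finset.sum_range_succ _ N, Finset.sum_add_distrib, mul_add, add_assoc]
    congr 2
    rw [Finset.mul_sum]
    apply Finset.sum_congr rfl
    intro r _
    rw [div_mul_div_comm, one_mul]
    congr 1
    have : ((b - 1 : ℕ) : ℝ) = b - 1 := by rw [Nat.cast_sub (by omega)]; simp
    push_cast
    rw [this]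
    field_simp
    ring

lemma harm_eq (M : ℕ) : ((harmonic M : ℚ) : ℝ) = ∑ n ∈ Finset.range M, 1 / ((n : ℝ) + 1) := by
  simp [harmonic]

lemma harm_lim {b : ℕ} (hb : 2 ≤ b) :
    Tendsto (fun N : ℕ => ((harmonic (b - 1 + b * N) : ℚ) : ℝ) - ((harmonic N : ℚ) : ℝ)) atTop
      (nhds (Real.log b)) := by
  have hb0 : (b : ℝ) ≠ 0 := by positivity
  have h1 := Real.tendsto_harmonic_sub_log
  have hM : Tendsto (fun N : ℕ => b - 1 + b * N) atTop atTop := by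
    apply tendsto_atTop_mono _ tendsto_id
    intro N
    have : 1 * N ≤ b * N := Nat.mul_le_mul_right _ (by omega)
    simp only [id]
    omega
  have h2 := h1.comp hM
  have h3 : Tendsto (fun N : ℕ => (b : ℝ) + ((b - 1 : ℕ) : ℝ) / N) atTop (nhds (b : ℝ)) := by
    simpa using tendsto_const_nhds.add (tendsto_const_div_atTop_nhds_zero_nat ((b - 1 : ℕ) : ℝ))
  have h4 := (Real.continuousAt_log hb0).tendsto.comp h3
  have h5 := (h2.sub h1).add h4
  rw [sub_self, zero_add] at h5
  refine h5.congr' ?_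
  filter_upwards [eventually_ge_atTop 1] with N hN
  have hN0 : (N : ℝ) ≠ 0 := by positivity
  have e : (b : ℝ) + ((b - 1 : ℕ) : ℝ) / N = ((b - 1 + b * N : ℕ) : ℝ) / N := by
    push_cast
    field_simp
    ring
  have hne : ((b - 1 + b * N : ℕ) : ℝ) ≠ 0 := by
    have : 0 < b * N := by positivity
    have : b - 1 + b * N ≠ 0 := by omega
    exact_mod_cast this
  simp only [Function.comp]
  rw [e, Real.log_div hne hN0]
  ring

lemma FF_functional {b : ℕ} (hb : 2 ≤ b) {x : ℝ} (hx : x ∈ Set.Icc (0:ℝ) 1) :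
    ∑ a ∈ Finset.Ico 1 b, 1 / ((a : ℝ) + x) =
      FF x + (-(1 / (b : ℝ))) * ∑ r ∈ Finset.range b, FF (((r : ℝ) + x) / b) + Real.log b := by
  have hb0 : (b : ℝ) ≠ 0 := by positivity
  have hM : Tendsto (fun N : ℕ => b - 1 + b * N) atTop atTop := by
    apply tendsto_atTop_mono _ tendsto_id
    intro N
    have : 1 * N ≤ b * N := Nat.mul_le_mul_right _ (by omega)
    simp only [id]
    omega
  have h1 := (FF_hasSum hx).tendsto_sum_nat.comp hM
  have h2 : Tendsto (fun N : ℕ => ∑ r ∈ Finset.range b, ∑ c ∈ Finset.range N,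
      (1 / (((c : ℝ) + 1) + ((r : ℝ) + x) / b) - 1 / ((c : ℝ) + 1))) atTop
      (nhds (∑ r ∈ Finset.range b, FF (((r : ℝ) + x) / b))) := by
    apply tendsto_finsetSum
    intro r hr
    exact (FF_hasSum (map_mem_unit hb (Finset.mem_range.1 hr) hx)).tendsto_sum_nat
  have h3 := (h1.add (h2.const_mul (-(1 / (b : ℝ))))).add (harm_lim hb)
  refine tendsto_nhds_unique ?_ h3
  refine tendsto_const_nhds.congr fun N => ?_
  simp only [Function.comp, Finset.sum_sub_distrib, FF_finite hb x N, ← harm_eq, Finset.sum_const,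
    Finset.card_range, nsmul_eq_mul]
  rw [Finset.sum_Ico_eq_sum_range]
  have : ∀ n : ℕ, 1 / (((1 + n : ℕ) : ℝ) + x) = 1 / (((n : ℝ) + 1) + x) := by
    intro n; push_cast; ring_nf
  simp only [this]
  field_simp
  ring

lemma irwin_exact {b : ℕ} (hb : 2 ≤ b) : irwinSum b 0 1 = b * Real.log b +
    (1 / (b : ℝ)) * (J0 b (fun x => FF (x / b)) - J1 b (fun x => FF (x / b))) := by
  have hc : ∀ r ∈ Finset.range b, UB (fun x => FF (((r : ℝ) + x) / b)) := fun r hr =>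
    FF_UB.comp hb (Finset.mem_range.1 hr)
  have hs : UB (fun x => ∑ r ∈ Finset.range b, FF (((r : ℝ) + x) / b)) :=
    UB.sum _ (fun (r : ℕ) x => FF (((r : ℝ) + x) / b)) hc
  rw [irwin_eq hb, J1_congr hb _ (fun x => (FF x + (-(1 / (b : ℝ))) *
    ∑ r ∈ Finset.range b, FF (((r : ℝ) + x) / b)) + Real.log b * 1)
    (fun x hx => by rw [FF_functional hb hx, mul_one])]
  rw [J1_add hb (f := fun x => FF x + (-(1 / (b : ℝ))) *
    ∑ r ∈ Finset.range b, FF (((r : ℝ) + x) / b)) (g := fun _ => Real.log b * 1)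
    (FF_UB.add (hs.smul _)) ⟨|Real.log b * 1|, fun _ _ => le_refl _⟩,
    J1_smul b (Real.log b) (fun _ => 1), J1_one hb,
    J1_add hb FF_UB (hs.smul _), J1_smul b _ (fun x => ∑ r ∈ Finset.range b, FF (((r : ℝ) + x) / b)),
    J1_sum hb _ (fun (r : ℕ) x => FF (((r : ℝ) + x) / b)) hc, J1_rec hb FF_UB,
    Finset.range_eq_Ico, Finset.sum_eq_sum_Ico_succ_bot (by omega : 0 < b)]
  have e : (fun x : ℝ => FF ((((0 : ℕ) : ℝ) + x) / b)) = fun x : ℝ => FF (x / b) := by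
    funext x
    rw [Nat.cast_zero, zero_add]
  rw [e]
  rw [show (0 + 1 : ℕ) = 1 from rfl]
  ring

noncomputable def uu (b m : ℕ) : ℝ := J0 b (fun x => x ^ m)
noncomputable def vv (b m : ℕ) : ℝ := J1 b (fun x => x ^ m)
noncomputable def dd (b m : ℕ) : ℝ := vv b m - uu b m
noncomputable def gam (b i : ℕ) : ℝ := ∑ a ∈ Finset.Ico 1 b, (a : ℝ) ^ i

lemma pow_expand (b a m : ℕ) : (fun x : ℝ => (((a : ℝ) + x) / b) ^ m) = fun x =>
    ∑ j ∈ Finset.range (m + 1), (1 / (b : ℝ) ^ m * ((m.choose j : ℝ) * (a : ℝ) ^ (m - j))) * x ^ j := by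
  funext x
  rw [div_pow, add_comm, add_pow, div_eq_mul_one_div, mul_comm, Finset.mul_sum]
  apply Finset.sum_congr rfl
  intro j _
  ring

lemma J0_shift {b : ℕ} (hb : 2 ≤ b) (m : ℕ) :
    ∑ a ∈ Finset.Ico 1 b, J0 b (fun x => (((a : ℝ) + x) / b) ^ m) =
    1 / (b : ℝ) ^ m * ∑ j ∈ Finset.range (m + 1), (m.choose j : ℝ) * gam b (m - j) * uu b j := by
  have h : ∀ a ∈ Finset.Ico 1 b, J0 b (fun x => (((a : ℝ) + x) / b) ^ m) =
      ∑ j ∈ Finset.range (m + 1),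
        (1 / (b : ℝ) ^ m * ((m.choose j : ℝ) * (a : ℝ) ^ (m - j))) * uu b j := by
    intro a _
    rw [pow_expand, J0_sum hb _ (fun (j : ℕ) (x : ℝ) =>
      (1 / (b : ℝ) ^ m * ((m.choose j : ℝ) * (a : ℝ) ^ (m - j))) * x ^ j)
      (fun j _ => (UB.pow j).smul _)]
    apply Finset.sum_congr rfl
    intro j _
    exact J0_smul b _ (fun x => x ^ j)
  rw [Finset.sum_congr rfl h, Finset.sum_comm, Finset.mul_sum]
  apply Finset.sum_congr rfl
  intro j _
  simp only [gam, Finset.mul_sum, Finset.sum_mul]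
  apply Finset.sum_congr rfl
  intro a _
  ring

lemma J1_shift {b : ℕ} (hb : 2 ≤ b) (m : ℕ) :
    ∑ a ∈ Finset.Ico 1 b, J1 b (fun x => (((a : ℝ) + x) / b) ^ m) =
    1 / (b : ℝ) ^ m * ∑ j ∈ Finset.range (m + 1), (m.choose j : ℝ) * gam b (m - j) * vv b j := by
  have h : ∀ a ∈ Finset.Ico 1 b, J1 b (fun x => (((a : ℝ) + x) / b) ^ m) =
      ∑ j ∈ Finset.range (m + 1),
        (1 / (b : ℝ) ^ m * ((m.choose j : ℝ) * (a : ℝ) ^ (m - j))) * vv b j := by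
    intro a _
    rw [pow_expand, J1_sum hb _ (fun (j : ℕ) (x : ℝ) =>
      (1 / (b : ℝ) ^ m * ((m.choose j : ℝ) * (a : ℝ) ^ (m - j))) * x ^ j)
      (fun j _ => (UB.pow j).smul _)]
    apply Finset.sum_congr rfl
    intro j _
    exact J1_smul b _ (fun x => x ^ j)
  rw [Finset.sum_congr rfl h, Finset.sum_comm, Finset.mul_sum]
  apply Finset.sum_congr rfl
  intro j _
  simp only [gam, Finset.mul_sum, Finset.sum_mul]
  apply Finset.sum_congr rfl
  intro a _
  ring

lemma gam_zero {b : ℕ} (hb : 2 ≤ b) : gam b 0 = b - 1 := by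
  simp [gam, Nat.cast_sub (by omega : 1 ≤ b)]

lemma gam_one {b : ℕ} (hb : 2 ≤ b) : gam b 1 = b * (b - 1) / 2 := by
  unfold gam
  induction b, hb using Nat.le_induction with
  | base => norm_num
  | succ n hn ih => rw [Finset.sum_Ico_succ_top (by omega), ih]; push_cast; ring

lemma gam_two {b : ℕ} (hb : 2 ≤ b) : gam b 2 = b * (b - 1) * (2 * b - 1) / 6 := by
  unfold gam
  induction b, hb using Nat.le_induction with
  | base => norm_num
  | succ n hn ih => rw [Finset.sum_Ico_succ_top (by omega), ih]; push_cast; ring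

lemma gam_nonneg (b i : ℕ) : 0 ≤ gam b i := Finset.sum_nonneg fun a _ => by positivity

lemma gam_le (b i : ℕ) : gam b i ≤ (b : ℝ) ^ (i + 1) := by
  have h : gam b i ≤ ∑ a ∈ Finset.Ico 1 b, (b : ℝ) ^ i := by
    apply Finset.sum_le_sum
    intro a ha
    have : (a : ℝ) ≤ b := by exact_mod_cast (Finset.mem_Ico.1 ha).2.le
    gcongr
  refine h.trans ?_
  rw [Finset.sum_const, nsmul_eq_mul, pow_succ', Nat.card_Ico]
  gcongr
  omega

lemma uu_zero {b : ℕ} (hb : 2 ≤ b) : uu b 0 = b := by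
  simpa [uu] using J0_one hb

lemma vv_zero {b : ℕ} (hb : 2 ≤ b) : vv b 0 = b := by
  simpa [vv] using J1_one hb

lemma dd_zero {b : ℕ} (hb : 2 ≤ b) : dd b 0 = 0 := by
  rw [dd, uu_zero hb, vv_zero hb, sub_self]

lemma uu_le {b : ℕ} (hb : 2 ≤ b) (m : ℕ) : uu b m ≤ b := by
  have := J0_abs_le hb (fun x => x ^ m) 1 (fun x hx => by
    rw [abs_pow, abs_of_nonneg hx.1]; exact pow_le_one₀ hx.1 hx.2)
  rw [one_mul] at this
  exact (le_abs_self _).trans this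

lemma uu_nonneg {b : ℕ} (hb : 2 ≤ b) (m : ℕ) : 0 ≤ uu b m := by
  apply tsum_nonneg
  intro l
  have h := K0_mono hb l (fun _ => 0 * 1) (fun x => x ^ m) (fun x hx => by
    have := hx.1
    simp only [zero_mul]
    positivity)
  rwa [K0_smul b l 0 (fun _ => 1), zero_mul] at h

lemma uu_rec {b : ℕ} (hb : 2 ≤ b) {m : ℕ} (hm : m ≠ 0) : (b : ℝ) ^ (m + 1) * uu b m =
    ∑ j ∈ Finset.range (m + 1), (m.choose j : ℝ) * gam b (m - j) * uu b j := by
  have hb0 : (b : ℝ) ≠ 0 := by positivity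
  have h := J0_rec hb (UB.pow m)
  rw [J0_shift hb, zero_pow hm, zero_add] at h
  rw [show uu b m = J0 b (fun x => x ^ m) from rfl, h]
  field_simp
  ring

lemma vv_rec {b : ℕ} (hb : 2 ≤ b) (m : ℕ) : (b : ℝ) ^ (m + 1) * vv b m =
    ∑ j ∈ Finset.range (m + 1), (m.choose j : ℝ) * gam b (m - j) * vv b j + uu b m := by
  have hb0 : (b : ℝ) ≠ 0 := by positivity
  have h := J1_rec hb (UB.pow m)
  have e : (fun x : ℝ => (x / (b : ℝ)) ^ m) = fun x => 1 / (b : ℝ) ^ m * x ^ m := by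
    funext x
    rw [div_pow]
    ring
  rw [J1_shift hb, e, J0_smul] at h
  rw [show vv b m = J1 b (fun x => x ^ m) from rfl, h,
    show uu b m = J0 b (fun x => x ^ m) from rfl]
  field_simp
  ring

lemma dd_rec {b : ℕ} (hb : 2 ≤ b) {m : ℕ} (hm : m ≠ 0) :
    ((b : ℝ) ^ (m + 1) - b + 1) * dd b m =
    ∑ j ∈ Finset.range m, (m.choose j : ℝ) * gam b (m - j) * dd b j + uu b m := by
  have h : (b : ℝ) ^ (m + 1) * dd b m =
    ∑ j ∈ Finset.range (m + 1), (m.choose j : ℝ) * gam b (m - j) * dd b j + uu b m := by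
    simp only [dd, mul_sub, Finset.sum_sub_distrib]
    rw [vv_rec hb, uu_rec hb hm]
    ring
  rw [Finset.sum_range_succ, Nat.sub_self, gam_zero hb, Nat.choose_self] at h
  push_cast at h
  linarith

lemma den_ge {b : ℕ} (hb : 2 ≤ b) {m : ℕ} (hm : m ≠ 0) :
    (b : ℝ) ^ (m + 1) / 2 ≤ (b : ℝ) ^ (m + 1) - b + 1 := by
  have h2 : (2:ℝ) ≤ b := by exact_mod_cast hb
  have h : (b : ℝ) ^ 2 ≤ (b : ℝ) ^ (m + 1) := pow_le_pow_right₀ (by linarith) (by omega)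
  nlinarith

lemma dd_step {b : ℕ} (hb : 2 ≤ b) {m : ℕ} (hm : 2 ≤ m) (C : ℝ)
    (h : ∀ j, 1 ≤ j → j < m → 0 ≤ dd b j ∧ dd b j ≤ C / b) :
    0 ≤ dd b m ∧ dd b m ≤ (2 * (2 ^ m * C + 1)) / (b : ℝ) ^ 2 := by
  have h2 : (2:ℝ) ≤ b := by exact_mod_cast hb
  have hb0 : (0:ℝ) < b := by linarith
  have hC : 0 ≤ C := by
    have h1 := h 1 le_rfl (by omega)
    have := h1.1.trans h1.2
    by_contra hc
    push Not at hc
    have := div_neg_of_neg_of_pos hc hb0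
    linarith
  have hd := dd_rec hb (show m ≠ 0 by omega)
  have hden := den_ge hb (show m ≠ 0 by omega)
  have hpos : 0 < (b : ℝ) ^ (m + 1) / 2 := by positivity
  have hnn : ∀ j, j < m → 0 ≤ dd b j := by
    intro j hj
    rcases Nat.eq_zero_or_pos j with rfl | hj0
    · rw [dd_zero hb]
    · exact (h j hj0 hj).1
  have hS0 : 0 ≤ ∑ j ∈ Finset.range m, (m.choose j : ℝ) * gam b (m - j) * dd b j := by
    apply Finset.sum_nonneg
    intro j hj
    have := hnn j (Finset.mem_range.1 hj)
    have := gam_nonneg b (m - j)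
    positivity
  have hS1 : ∑ j ∈ Finset.range m, (m.choose j : ℝ) * gam b (m - j) * dd b j ≤
      2 ^ m * C * (b : ℝ) ^ (m - 1) := by
    have h1 : ∀ j ∈ Finset.range m, (m.choose j : ℝ) * gam b (m - j) * dd b j ≤
        (m.choose j : ℝ) * (C * (b : ℝ) ^ (m - 1)) := by
      intro j hj
      have hj := Finset.mem_range.1 hj
      rcases Nat.eq_zero_or_pos j with rfl | hj0
      · rw [dd_zero hb]; simp; positivity
      · have h3 := (h j hj0 hj).2
        have h4 : gam b (m - j) ≤ (b : ℝ) ^ m := (gam_le b (m - j)).trans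
          (pow_le_pow_right₀ (by linarith) (by omega))
        rw [mul_assoc]
        have h5 : gam b (m - j) * dd b j ≤ (b : ℝ) ^ m * (C / b) :=
          mul_le_mul h4 h3 (hnn j hj) (by positivity)
        have h6 : (b : ℝ) ^ m * (C / b) = C * (b : ℝ) ^ (m - 1) := by
          obtain ⟨k, rfl⟩ : ∃ k, m = k + 1 := ⟨m - 1, by omega⟩
          rw [Nat.add_sub_cancel, pow_succ]
          field_simp
        rw [h6] at h5
        gcongr
    refine (Finset.sum_le_sum h1).trans ?_
    rw [← Finset.sum_mul, mul_assoc]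
    gcongr
    have h7 := Nat.sum_range_choose m
    rw [Finset.sum_range_succ] at h7
    have h8 : ∑ j ∈ Finset.range m, m.choose j ≤ 2 ^ m := by omega
    exact_mod_cast h8
  have hu0 := uu_nonneg hb m
  have hu1 := uu_le hb m
  have hu2 : (b : ℝ) ≤ (b : ℝ) ^ (m - 1) := le_self_pow₀ (by linarith) (by omega)
  have hdn : 0 ≤ dd b m := by
    by_contra hc
    push Not at hc
    have := mul_neg_of_pos_of_neg (hpos.trans_le hden) hc
    linarith
  refine ⟨hdn, ?_⟩
  rw [le_div_iff₀ (by positivity)]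
  have h9 : (b : ℝ) ^ (m + 1) / 2 * dd b m ≤ (2 ^ m * C + 1) * (b : ℝ) ^ (m - 1) := by
    calc _ ≤ ((b : ℝ) ^ (m + 1) - b + 1) * dd b m := by gcongr
      _ ≤ _ := by rw [hd]; linarith
  have e : (b : ℝ) ^ (m + 1) = (b : ℝ) ^ (m - 1) * b ^ 2 := by
    rw [← pow_add]; congr 1; omega
  rw [e] at h9
  have hp : 0 < (b : ℝ) ^ (m - 1) := by positivity
  have : (b : ℝ) ^ (m - 1) * (dd b m * b ^ 2) ≤ (b : ℝ) ^ (m - 1) * (2 * (2 ^ m * C + 1)) := by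
    linarith
  exact le_of_mul_le_mul_left this hp

lemma uu1 {b : ℕ} (hb : 2 ≤ b) : ((b : ℝ) ^ 2 - b + 1) * uu b 1 = b ^ 2 * (b - 1) / 2 := by
  have h := uu_rec hb one_ne_zero
  simp [Finset.sum_range_succ, gam_zero hb, gam_one hb, uu_zero hb] at h
  linarith

lemma dd1 {b : ℕ} (hb : 2 ≤ b) : ((b : ℝ) ^ 2 - b + 1) * dd b 1 = uu b 1 := by
  have h := dd_rec hb one_ne_zero
  simp [dd_zero hb] at h
  linarith

lemma uu2 {b : ℕ} (hb : 2 ≤ b) : ((b : ℝ) ^ 3 - b + 1) * uu b 2 =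
    b * (b - 1) * uu b 1 + b * (b * (b - 1) * (2 * b - 1) / 6) := by
  have h := uu_rec hb two_ne_zero
  simp [Finset.sum_range_succ, gam_zero hb, gam_one hb, gam_two hb, uu_zero hb] at h
  linarith

lemma dd2 {b : ℕ} (hb : 2 ≤ b) : ((b : ℝ) ^ 3 - b + 1) * dd b 2 =
    b * (b - 1) * dd b 1 + uu b 2 := by
  have h := dd_rec hb two_ne_zero
  simp [Finset.sum_range_succ, gam_one hb, dd_zero hb] at h
  linarith

lemma dd3 {b : ℕ} (hb : 2 ≤ b) : ((b : ℝ) ^ 4 - b + 1) * dd b 3 =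
    b * (b - 1) * (2 * b - 1) / 2 * dd b 1 + 3 * (b * (b - 1) / 2) * dd b 2 + uu b 3 := by
  have h := dd_rec hb three_ne_zero
  simp [Finset.sum_range_succ, gam_one hb, gam_two hb, dd_zero hb] at h
  linarith

lemma abs_bound_of_mul {e M P B : ℝ} (hM : 0 < M) (h : M * e = P) (h1 : P ≤ M * B)
    (h2 : -(M * B) ≤ P) : |e| ≤ B := by
  rw [abs_le]
  constructor
  · apply le_of_mul_le_mul_left _ hM
    linarith
  · apply le_of_mul_le_mul_left _ hM
    linarith

lemma dd1' {b : ℕ} (hb : 2 ≤ b) : ((b : ℝ) ^ 2 - b + 1) ^ 2 * dd b 1 = b ^ 2 * (b - 1) / 2 := by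
  rw [← uu1 hb, ← dd1 hb]; ring

lemma dd1_asym {b : ℕ} (hb : 2 ≤ b) :
    |dd b 1 - (1 / (2 * (b : ℝ)) + 1 / (2 * (b : ℝ) ^ 2) - 1 / (2 * (b : ℝ) ^ 3)
      - 3 / (2 * (b : ℝ) ^ 4))| ≤ 20 / (b : ℝ) ^ 5 := by
  have h := dd1' hb
  obtain ⟨c, hc0, hc⟩ : ∃ c : ℝ, 0 ≤ c ∧ (b : ℝ) = c + 2 := by
    have : (2:ℝ) ≤ b := by exact_mod_cast hb
    exact ⟨b - 2, by linarith, by ring⟩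
  generalize (b : ℝ) = x at *
  have hx : 0 < x := by linarith
  have hQ : 0 < x ^ 2 - x + 1 := by nlinarith
  have e : 2 * x ^ 5 * (x ^ 2 - x + 1) ^ 2 * (dd b 1 - (1 / (2 * x) + 1 / (2 * x ^ 2)
      - 1 / (2 * x ^ 3) - 3 / (2 * x ^ 4))) =
      x * (x ^ 6 * (x - 1) - (x ^ 3 + x ^ 2 - x - 3) * (x ^ 2 - x + 1) ^ 2) := by
    have : 2 * x ^ 5 * (x ^ 2 - x + 1) ^ 2 * (dd b 1 - (1 / (2 * x) + 1 / (2 * x ^ 2)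
      - 1 / (2 * x ^ 3) - 3 / (2 * x ^ 4))) = 2 * x ^ 5 * ((x ^ 2 - x + 1) ^ 2 * dd b 1) -
      2 * x ^ 5 * (x ^ 2 - x + 1) ^ 2 * (1 / (2 * x) + 1 / (2 * x ^ 2)
      - 1 / (2 * x ^ 3) - 3 / (2 * x ^ 4)) := by ring
    rw [this, h]
    field_simp
  have hM : 2 * x ^ 5 * (x ^ 2 - x + 1) ^ 2 * (20 / x ^ 5) = 40 * (x ^ 2 - x + 1) ^ 2 := by
    field_simp
    ring
  apply abs_bound_of_mul (by positivity) e
  · rw [hM, ← sub_nonneg, hc]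
    ring_nf
    positivity
  · rw [hM, ← sub_nonneg, hc]
    ring_nf
    positivity

lemma dd1_asym' {b : ℕ} (hb : 2 ≤ b) :
    |dd b 1 - 1 / (2 * (b : ℝ))| ≤ 4 / (b : ℝ) ^ 2 := by
  have h := dd1' hb
  obtain ⟨c, hc0, hc⟩ : ∃ c : ℝ, 0 ≤ c ∧ (b : ℝ) = c + 2 := by
    have : (2:ℝ) ≤ b := by exact_mod_cast hb
    exact ⟨b - 2, by linarith, by ring⟩
  generalize (b : ℝ) = x at *
  have hx : 0 < x := by linarith
  have hQ : 0 < x ^ 2 - x + 1 := by nlinarith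
  have e : 2 * x ^ 2 * (x ^ 2 - x + 1) ^ 2 * (dd b 1 - 1 / (2 * x)) =
      x ^ 4 * (x - 1) - x * (x ^ 2 - x + 1) ^ 2 := by
    have : 2 * x ^ 2 * (x ^ 2 - x + 1) ^ 2 * (dd b 1 - 1 / (2 * x)) =
      2 * x ^ 2 * ((x ^ 2 - x + 1) ^ 2 * dd b 1) -
      2 * x ^ 2 * (x ^ 2 - x + 1) ^ 2 * (1 / (2 * x)) := by ring
    rw [this, h]
    field_simp
  have hM : 2 * x ^ 2 * (x ^ 2 - x + 1) ^ 2 * (4 / x ^ 2) = 8 * (x ^ 2 - x + 1) ^ 2 := by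
    field_simp
    ring
  apply abs_bound_of_mul (by positivity) e
  · rw [hM, ← sub_nonneg, hc]
    ring_nf
    positivity
  · rw [hM, ← sub_nonneg, hc]
    ring_nf
    positivity

lemma dd1_bounds {b : ℕ} (hb : 2 ≤ b) : 0 ≤ dd b 1 ∧ dd b 1 ≤ 5 / b := by
  have hx : (2:ℝ) ≤ b := by exact_mod_cast hb
  constructor
  · have h := dd1 hb
    have hu := uu_nonneg hb 1
    by_contra hc
    push Not at hc
    have := mul_neg_of_pos_of_neg (show 0 < (b : ℝ) ^ 2 - b + 1 by nlinarith) hc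
    linarith
  · have h := (abs_le.1 (dd1_asym' hb)).2
    have h2 : 4 / (b : ℝ) ^ 2 ≤ 2 / b := by
      rw [div_le_div_iff₀ (by positivity) (by positivity)]
      nlinarith
    have h3 : 1 / (2 * (b : ℝ)) ≤ 3 / b := by
      rw [div_le_div_iff₀ (by positivity) (by positivity)]
      nlinarith
    have : 5 / (b : ℝ) = 2 / b + 3 / b := by ring
    linarith

lemma dd2_asym {b : ℕ} (hb : 2 ≤ b) :
    |dd b 2 - 5 / (6 * (b : ℝ) ^ 2)| ≤ 100 / (b : ℝ) ^ 4 := by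
  have h1 := dd1' hb
  have hu := uu1 hb
  have hu2 := uu2 hb
  have h := dd2 hb
  obtain ⟨c, hc0, hc⟩ : ∃ c : ℝ, 0 ≤ c ∧ (b : ℝ) = c + 2 := by
    have : (2:ℝ) ≤ b := by exact_mod_cast hb
    exact ⟨b - 2, by linarith, by ring⟩
  generalize (b : ℝ) = x at *
  have hx : 0 < x := by linarith
  have hQ : 0 < x ^ 2 - x + 1 := by nlinarith
  have hR : 0 < x ^ 3 - x + 1 := by
    rw [hc]; ring_nf; positivity
  have k : (x ^ 2 - x + 1) ^ 2 * (x ^ 3 - x + 1) ^ 2 * dd b 2 =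
      x * (x - 1) * (x ^ 3 - x + 1) * (x ^ 2 * (x - 1) / 2) + (x ^ 2 - x + 1) *
      (x * (x - 1) * (x ^ 2 * (x - 1) / 2) + (x ^ 2 - x + 1) *
        (x * (x * (x - 1) * (2 * x - 1) / 6))) := by
    linear_combination (x ^ 2 - x + 1) ^ 2 * (x ^ 3 - x + 1) * h +
      x * (x - 1) * (x ^ 3 - x + 1) * h1 + (x ^ 2 - x + 1) ^ 2 * hu2 +
      (x ^ 2 - x + 1) * x * (x - 1) * hu
  have e : 6 * x ^ 4 * (x ^ 2 - x + 1) ^ 2 * (x ^ 3 - x + 1) ^ 2 * (dd b 2 - 5 / (6 * x ^ 2)) =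
      6 * x ^ 4 * (x * (x - 1) * (x ^ 3 - x + 1) * (x ^ 2 * (x - 1) / 2) + (x ^ 2 - x + 1) *
      (x * (x - 1) * (x ^ 2 * (x - 1) / 2) + (x ^ 2 - x + 1) *
        (x * (x * (x - 1) * (2 * x - 1) / 6)))) -
      5 * x ^ 2 * (x ^ 2 - x + 1) ^ 2 * (x ^ 3 - x + 1) ^ 2 := by
    rw [← k]
    field_simp
  have hM : 6 * x ^ 4 * (x ^ 2 - x + 1) ^ 2 * (x ^ 3 - x + 1) ^ 2 * (100 / x ^ 4) =
      600 * (x ^ 2 - x + 1) ^ 2 * (x ^ 3 - x + 1) ^ 2 := by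
    field_simp
    ring
  apply abs_bound_of_mul (by positivity) e
  · rw [hM, ← sub_nonneg, hc]
    ring_nf
    positivity
  · rw [hM, ← sub_nonneg, hc]
    ring_nf
    positivity

lemma dd3_asym {b : ℕ} (hb : 2 ≤ b) :
    |dd b 3 - 1 / (2 * (b : ℝ) ^ 2)| ≤ 400 / (b : ℝ) ^ 3 := by
  have h1 := dd1_asym' hb
  have h2 := dd_step hb (le_refl 2) 5 (fun j hj hj' => by
    obtain rfl : j = 1 := by omega
    exact dd1_bounds hb)
  have h := dd3 hb
  have hu0 := uu_nonneg hb 3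
  have hu1 := uu_le hb 3
  have hx2 : (2:ℝ) ≤ b := by exact_mod_cast hb
  have hden := den_ge hb (m := 3) (by norm_num)
  generalize (b : ℝ) = x at *
  have hx : 0 < x := by linarith
  norm_num at hden h2
  set d := dd b 1 - 1 / (2 * x) with hd
  have hdd : dd b 1 = 1 / (2 * x) + d := by rw [hd]; ring
  have hS : 0 < x ^ 4 - x + 1 := lt_of_lt_of_le (by positivity) hden
  have e : (x ^ 4 - x + 1) * (dd b 3 - 1 / (2 * x ^ 2)) =
      (1 - 3 * x) / 4 + x * (x - 1) * (2 * x - 1) / 2 * d + 3 * (x * (x - 1) / 2) * dd b 2 + uu b 3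
        + (x - 1) / (2 * x ^ 2) := by
    rw [mul_sub, h, hdd]
    field_simp
    ring
  have a1 : |x * (x - 1) * (2 * x - 1) / 2 * d| ≤ 4 * x := by
    rw [abs_mul]
    have : |x * (x - 1) * (2 * x - 1) / 2| ≤ x ^ 3 := by
      rw [abs_of_nonneg (by
        have : 0 ≤ x - 1 := by linarith
        have : 0 ≤ 2 * x - 1 := by linarith
        positivity)]
      nlinarith [mul_pos hx hx]
    calc _ ≤ x ^ 3 * (4 / x ^ 2) := mul_le_mul this h1 (abs_nonneg _) (by positivity)
      _ = 4 * x := by field_simp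
  have a2 : 3 * (x * (x - 1) / 2) * dd b 2 ≤ 63 * x := by
    calc _ ≤ 3 * (x * x / 2) * dd b 2 := by
          have := h2.1
          gcongr
          linarith
      _ ≤ 3 * (x * x / 2) * (42 / x ^ 2) := by gcongr; exact h2.2
      _ = 63 := by field_simp; norm_num
      _ ≤ 63 * x := by linarith
  have a3 : 0 ≤ 3 * (x * (x - 1) / 2) * dd b 2 := by
    have := h2.1
    have : 0 ≤ x - 1 := by linarith
    positivity
  have a4 : (x - 1) / (2 * x ^ 2) ≤ x := by
    rw [div_le_iff₀ (by positivity)]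
    nlinarith [mul_pos hx hx, mul_pos (mul_pos hx hx) hx]
  have a5 : 0 ≤ (x - 1) / (2 * x ^ 2) := div_nonneg (by linarith) (by positivity)
  have hB : 200 * x ≤ (x ^ 4 - x + 1) * (400 / x ^ 3) := by
    calc 200 * x = x ^ 4 / 2 * (400 / x ^ 3) := by field_simp; norm_num
      _ ≤ _ := by gcongr
  have a1' := abs_le.1 a1
  apply abs_bound_of_mul hS e
  · linarith
  · linarith

lemma dd_bounds (m : ℕ) : ∃ C : ℝ, ∀ b : ℕ, 2 ≤ b → ∀ j, 1 ≤ j → j ≤ m →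
    0 ≤ dd b j ∧ dd b j ≤ C / b := by
  induction m with
  | zero => exact ⟨0, fun b hb j h1 h2 => by omega⟩
  | succ m ih =>
    obtain ⟨C, hC⟩ := ih
    refine ⟨max (max C 5) (2 * (2 ^ (m + 1) * C + 1)), fun b hb j h1 h2 => ?_⟩
    have hx : (2:ℝ) ≤ b := by exact_mod_cast hb
    rcases Nat.lt_or_ge j (m + 1) with hj | hj
    · have := hC b hb j h1 (by omega)
      refine ⟨this.1, this.2.trans ?_⟩
      gcongr
      exact (le_max_left _ _).trans (le_max_left _ _)
    · obtain rfl : j = m + 1 := by omega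
      rcases Nat.eq_zero_or_pos m with rfl | hm
      · have := dd1_bounds hb
        refine ⟨this.1, this.2.trans ?_⟩
        gcongr
        exact (le_max_right _ _).trans (le_max_left _ _)
      · have := dd_step hb (show 2 ≤ m + 1 by omega) C (fun j h1 h2 => hC b hb j h1 (by omega))
        refine ⟨this.1, this.2.trans ?_⟩
        have h0 : 0 ≤ 2 * (2 ^ (m + 1) * C + 1) := by
          have h3 := this.1.trans this.2
          by_contra hc
          push Not at hc
          have := div_neg_of_neg_of_pos hc (show (0:ℝ) < (b : ℝ) ^ 2 by positivity)
          linarith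
        apply div_le_div₀ (h0.trans (le_max_right _ _)) (le_max_right _ _) (by positivity)
        nlinarith

lemma dd_bounds2 (m : ℕ) (hm : 2 ≤ m) : ∃ C : ℝ, ∀ b : ℕ, 2 ≤ b → |dd b m| ≤ C / (b : ℝ) ^ 2 := by
  obtain ⟨C, hC⟩ := dd_bounds m
  refine ⟨2 * (2 ^ m * C + 1), fun b hb => ?_⟩
  have := dd_step hb hm C (fun j h1 h2 => hC b hb j h1 h2.le)
  rw [abs_of_nonneg this.1]
  exact this.2

noncomputable def cf (b j : ℕ) : ℝ := (-1) ^ j * zetaR (j + 1) / (b : ℝ) ^ j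

noncomputable def rem (b : ℕ) : ℝ → ℝ := fun x =>
  FF (x / b) + (-1) * ∑ j ∈ Finset.Ico 1 7, cf b j * x ^ j

lemma rem_bound {b : ℕ} (hb : 2 ≤ b) (x : ℝ) (hx : x ∈ Set.Icc (0:ℝ) 1) :
    |rem b x| ≤ zetaR 8 / (b : ℝ) ^ 7 := by
  have hy : x / b ∈ Set.Icc (0:ℝ) 1 := by simpa using map_mem_unit hb (show 0 < b by omega) hx
  have h := FF_expand hy
  have hz : 0 ≤ zetaR 8 := tsum_nonneg fun n => by positivity
  have e : rem b x = FF (x / b) - (-zetaR 2 * (x / b) + zetaR 3 * (x / b) ^ 2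
      - zetaR 4 * (x / b) ^ 3 + zetaR 5 * (x / b) ^ 4 - zetaR 6 * (x / b) ^ 5
      + zetaR 7 * (x / b) ^ 6) := by
    simp only [rem, cf, Finset.sum_Ico_succ_top (show 1 ≤ 6 by norm_num),
      Finset.sum_Ico_succ_top (show 1 ≤ 5 by norm_num),
      Finset.sum_Ico_succ_top (show 1 ≤ 4 by norm_num),
      Finset.sum_Ico_succ_top (show 1 ≤ 3 by norm_num),
      Finset.sum_Ico_succ_top (show 1 ≤ 2 by norm_num),
      Finset.sum_Ico_succ_top (show 1 ≤ 1 by norm_num), Finset.Ico_self, Finset.sum_empty, div_pow]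
    ring
  rw [e]
  refine h.trans ?_
  rw [div_pow, ← mul_div_assoc]
  gcongr
  have : x ^ 7 ≤ 1 := pow_le_one₀ hx.1 hx.2
  nlinarith

lemma irwin_expand {b : ℕ} (hb : 2 ≤ b) : ∃ R : ℝ, |R| ≤ 2 * zetaR 8 / (b : ℝ) ^ 7 ∧
    irwinSum b 0 1 = b * Real.log b + zetaR 2 / (b : ℝ) ^ 2 * dd b 1 - zetaR 3 / (b : ℝ) ^ 3 * dd b 2
      + zetaR 4 / (b : ℝ) ^ 4 * dd b 3 - zetaR 5 / (b : ℝ) ^ 5 * dd b 4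
      + zetaR 6 / (b : ℝ) ^ 6 * dd b 5 - zetaR 7 / (b : ℝ) ^ 7 * dd b 6 + R := by
  have hb0 : (0 : ℝ) < b := by positivity
  have hub : UB (rem b) := ⟨_, rem_bound hb⟩
  have hp : ∀ j ∈ Finset.Ico 1 7, UB (fun x => cf b j * x ^ j) := fun j _ => (UB.pow j).smul _
  have hps : UB (fun x => ∑ j ∈ Finset.Ico 1 7, cf b j * x ^ j) :=
    UB.sum _ (fun (j : ℕ) (x : ℝ) => cf b j * x ^ j) hp
  have e : (fun x : ℝ => FF (x / b)) =
      fun x => rem b x + ∑ j ∈ Finset.Ico 1 7, cf b j * x ^ j := by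
    funext x
    simp only [rem]
    ring
  have k0 : J0 b (fun x => FF (x / b)) = J0 b (rem b) + ∑ j ∈ Finset.Ico 1 7, cf b j * uu b j := by
    rw [e, J0_add hb hub hps, J0_sum hb _ (fun (j : ℕ) (x : ℝ) => cf b j * x ^ j) hp]
    congr 1
    exact Finset.sum_congr rfl fun j _ => J0_smul b _ (fun x => x ^ j)
  have k1 : J1 b (fun x => FF (x / b)) = J1 b (rem b) + ∑ j ∈ Finset.Ico 1 7, cf b j * vv b j := by
    rw [e, J1_add hb hub hps, J1_sum hb _ (fun (j : ℕ) (x : ℝ) => cf b j * x ^ j) hp]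
    congr 1
    exact Finset.sum_congr rfl fun j _ => J1_smul b _ (fun x => x ^ j)
  refine ⟨1 / (b : ℝ) * (J0 b (rem b) - J1 b (rem b)), ?_, ?_⟩
  · have h0 := abs_le.1 (J0_abs_le hb (rem b) _ (rem_bound hb))
    have h1 := abs_le.1 (J1_abs_le hb (rem b) _ (rem_bound hb))
    have h2 : |J0 b (rem b) - J1 b (rem b)| ≤ 2 * (zetaR 8 / (b : ℝ) ^ 7 * b) := by
      rw [abs_le]
      constructor <;> linarith [h0.1, h0.2, h1.1, h1.2]
    rw [abs_mul, abs_of_pos (by positivity)]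
    calc _ ≤ 1 / (b : ℝ) * (2 * (zetaR 8 / (b : ℝ) ^ 7 * b)) := by gcongr
      _ = _ := by field_simp
  · rw [irwin_exact hb, k0, k1]
    simp only [cf, dd, Finset.sum_Ico_succ_top (show 1 ≤ 6 by norm_num),
      Finset.sum_Ico_succ_top (show 1 ≤ 5 by norm_num),
      Finset.sum_Ico_succ_top (show 1 ≤ 4 by norm_num),
      Finset.sum_Ico_succ_top (show 1 ≤ 3 by norm_num),
      Finset.sum_Ico_succ_top (show 1 ≤ 2 by norm_num),
      Finset.sum_Ico_succ_top (show 1 ≤ 1 by norm_num), Finset.Ico_self, Finset.sum_empty]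
    field_simp
    ring

lemma term_bound {x z e C : ℝ} (hx : 2 ≤ x) {i j : ℕ} (hij : 7 ≤ i + j) (h : |e| ≤ C / x ^ j) :
    |z / x ^ i * e| ≤ |z| * |C| / x ^ 7 := by
  have hx0 : 0 < x := by linarith
  rw [abs_mul, abs_div, abs_of_pos (show 0 < x ^ i by positivity)]
  calc _ ≤ |z| / x ^ i * (|C| / x ^ j) := by
        gcongr
        refine h.trans ?_
        gcongr
        exact le_abs_self C
    _ = |z| * |C| / x ^ (i + j) := by rw [pow_add]; field_simp
    _ ≤ _ := by
        gcongr
        linarith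

theorem irwin_zero_one_asymptotic :
    (fun b : ℕ => irwinSum b 0 1 -
      ((b : ℝ) * Real.log b + zetaR 2 / (2 * (b : ℝ) ^ 3) + zetaR 2 / (2 * (b : ℝ) ^ 4)
        - (3 * zetaR 2 + 5 * zetaR 3) / (6 * (b : ℝ) ^ 5)
        - (3 * zetaR 2 - zetaR 4) / (2 * (b : ℝ) ^ 6)))
      =O[atTop] fun b : ℕ => ((b : ℝ) ^ 7)⁻¹ := by
  obtain ⟨C4, hC4⟩ := dd_bounds2 4 (by norm_num)
  obtain ⟨C5, hC5⟩ := dd_bounds2 5 (by norm_num)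
  obtain ⟨C6, hC6⟩ := dd_bounds2 6 (by norm_num)
  apply IsBigO.of_bound (|zetaR 2| * |20| + |zetaR 3| * |100| + |zetaR 4| * |400| +
    |zetaR 5| * |C4| + |zetaR 6| * |C5| + |zetaR 7| * |C6| + 2 * zetaR 8)
  filter_upwards [eventually_ge_atTop 2] with b hb
  have hx : (2:ℝ) ≤ b := by exact_mod_cast hb
  have hx0 : (0:ℝ) < b := by linarith
  obtain ⟨R, hR, hI⟩ := irwin_expand hb
  have t1 := term_bound (z := zetaR 2) hx (i := 2) (by norm_num) (dd1_asym hb)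
  have t2 := term_bound (z := zetaR 3) hx (i := 3) (by norm_num) (dd2_asym hb)
  have t3 := term_bound (z := zetaR 4) hx (i := 4) (by norm_num) (dd3_asym hb)
  have t4 := term_bound (z := zetaR 5) hx (i := 5) (by norm_num) (hC4 b hb)
  have t5 := term_bound (z := zetaR 6) hx (i := 6) (by norm_num) (hC5 b hb)
  have t6 := term_bound (z := zetaR 7) hx (i := 7) (by norm_num) (hC6 b hb)
  rw [norm_inv, Real.norm_of_nonneg (show 0 ≤ (b : ℝ) ^ 7 by positivity), ← div_eq_mul_inv,
    Real.norm_eq_abs, hI]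
  simp only [add_div]
  have e : (b : ℝ) * Real.log b + zetaR 2 / (b : ℝ) ^ 2 * dd b 1 - zetaR 3 / (b : ℝ) ^ 3 * dd b 2
      + zetaR 4 / (b : ℝ) ^ 4 * dd b 3 - zetaR 5 / (b : ℝ) ^ 5 * dd b 4
      + zetaR 6 / (b : ℝ) ^ 6 * dd b 5 - zetaR 7 / (b : ℝ) ^ 7 * dd b 6 + R -
      ((b : ℝ) * Real.log b + zetaR 2 / (2 * (b : ℝ) ^ 3) + zetaR 2 / (2 * (b : ℝ) ^ 4)
        - (3 * zetaR 2 / (6 * (b : ℝ) ^ 5) + 5 * zetaR 3 / (6 * (b : ℝ) ^ 5))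
        - (3 * zetaR 2 - zetaR 4) / (2 * (b : ℝ) ^ 6)) =
      zetaR 2 / (b : ℝ) ^ 2 * (dd b 1 - (1 / (2 * (b : ℝ)) + 1 / (2 * (b : ℝ) ^ 2)
        - 1 / (2 * (b : ℝ) ^ 3) - 3 / (2 * (b : ℝ) ^ 4)))
      - zetaR 3 / (b : ℝ) ^ 3 * (dd b 2 - 5 / (6 * (b : ℝ) ^ 2))
      + zetaR 4 / (b : ℝ) ^ 4 * (dd b 3 - 1 / (2 * (b : ℝ) ^ 2))
      - zetaR 5 / (b : ℝ) ^ 5 * dd b 4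
      + zetaR 6 / (b : ℝ) ^ 6 * dd b 5 - zetaR 7 / (b : ℝ) ^ 7 * dd b 6 + R := by
    field_simp
    ring
  rw [e]
  rw [abs_le] at *
  constructor
  · linarith [t1.1, t2.2, t3.1, t4.2, t5.1, t6.2, hR.1]
  · linarith [t1.2, t2.1, t3.2, t4.1, t5.2, t6.1, hR.2]
end
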